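/- arXiv:2408.02002 — 3 statements merged into one kernel-verified Lean document; each statement's English description precedes it below -/
import Mathlib

section
/- Let n be a positive integer with n ≡ 1 (mod 3), and let q be an indeterminate. Define Aq(k) = [6k+1]·(q;q³)_k⁶/(q³;q³)_k⁶·q^{3k}, where [s] = (1-q^s)/(1-q) and (x;q³)_k = ∏_{i=0}^{k-1}(1-xq^{3i}). Then, as rational functions in q, ∑_{i+j ≤ n-1, i,j ≥ 0} Aq(i)Aq(j) ≡ [n]²·((q²;q³)_{(n-1)/3})⁶/((q³;q³)_{(n-1)/3})⁶ · {1 + 2[n]²(2-qⁿ)·∑_{r=1}^{(n-1)/3}(q^{3r-1}/[3r-1]² - q^{3r}/[3r]²)} (mod Φ_n(q)⁶), meaning the difference, when written as a fraction of polynomials with denominator coprime to Φ_n(q), has numerator divisible by Φ_n(q)⁶, where Φ_n(q) is the n-th cyclotomic polynomial. -/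
open Finset

/-- The indeterminate `q` in the field of rational functions `ℚ(q)`. -/
noncomputable def qq : RatFunc ℚ := RatFunc.X

/-- The q-Pochhammer symbol `(x; q³)_k = ∏_{i=0}^{k-1} (1 - x q^{3i})`. -/
noncomputable def poch (x : RatFunc ℚ) (k : ℕ) : RatFunc ℚ :=
  ∏ i ∈ range k, (1 - x * qq ^ (3 * i))

/-- The q-integer `[s] = (1 - q^s)/(1 - q)`. -/
noncomputable def qint (s : ℕ) : RatFunc ℚ := (1 - qq ^ s) / (1 - qq)

/-- `A_q(k) = [6k+1] (q;q³)_k⁶ / (q³;q³)_k⁶ · q^{3k}`. -/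
noncomputable def Aq (k : ℕ) : RatFunc ℚ :=
  qint (6 * k + 1) * poch qq k ^ 6 / poch (qq ^ 3) k ^ 6 * qq ^ (3 * k)

/-- The `p`-Pochhammer symbol `(x; p)_k` in an arbitrary commutative ring. -/
def qPoch {K : Type*} [CommRing K] (p x : K) (k : ℕ) : K := ∏ i ∈ range k, (1 - x * p ^ i)

theorem qPoch_succ {K : Type*} [CommRing K] (p x : K) (k : ℕ) :
    qPoch p x (k + 1) = qPoch p x k * (1 - x * p ^ k) := prod_range_succ _ _

theorem qPoch_succ' {K : Type*} [CommRing K] (p x : K) (k : ℕ) :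
    qPoch p x (k + 1) = (1 - x) * qPoch p (x * p) k := by
  simp only [qPoch, prod_range_succ', pow_zero, mul_one, mul_comm _ (1 - x)]
  congr 1
  exact prod_congr rfl fun i _ => by ring

/-- The `k`-th term of the very-well-poised basic hypergeometric series
`₈φ₇(a; b, c, d, e, f; p, p)`, multiplied by `1 - a`. -/
def wellPoised {K : Type*} [Field K] (p a b c d e f : K) (k : ℕ) : K :=
  (1 - a * p ^ (2 * k)) * p ^ k *
    (qPoch p a k * qPoch p b k * qPoch p c k * qPoch p d k * qPoch p e k * qPoch p f k) /
    (qPoch p p k * qPoch p (a * p / b) k * qPoch p (a * p / c) k * qPoch p (a * p / d) k *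
      qPoch p (a * p / e) k * qPoch p (a * p / f) k)

/-- The common factor in the telescoping proof of Jackson's sum. -/
def jacksonCert {K : Type*} [Field K] (p a b c d e f : K) (j : ℕ) : K :=
  qPoch p a (j + 1) * qPoch p b (j + 1) * qPoch p c (j + 1) * qPoch p d (j + 1) *
      qPoch p (e * p) j * qPoch p f j /
    (qPoch p p j * qPoch p (a * p / b) j * qPoch p (a * p / c) j * qPoch p (a * p / d) j *
      qPoch p (a * p / e) j * qPoch p (a * p ^ 2 / f) j)

theorem jacksonCert_succ {K : Type*} [Field K] (p a b c d e f : K) (j : ℕ) :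
    jacksonCert p a b c d e f (j + 1) = jacksonCert p a b c d e f j *
      ((1 - a * p ^ (j + 1)) * (1 - b * p ^ (j + 1)) * (1 - c * p ^ (j + 1)) *
        (1 - d * p ^ (j + 1)) * (1 - e * p ^ (j + 1)) * (1 - f * p ^ j) /
      ((1 - p ^ (j + 1)) * (1 - a * p ^ (j + 1) / b) * (1 - a * p ^ (j + 1) / c) *
        (1 - a * p ^ (j + 1) / d) * (1 - a * p ^ (j + 1) / e) *
        (1 - a * p ^ (j + 2) / f))) := by
  have h (x : K) : a * p / x * p ^ j = a * p ^ (j + 1) / x := by ring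
  have h' (x : K) : a * p ^ 2 / x * p ^ j = a * p ^ (j + 2) / x := by ring
  have h1 : e * p * p ^ j = e * p ^ (j + 1) := by ring
  have h2 : p * p ^ j = p ^ (j + 1) := by ring
  simp only [jacksonCert, qPoch_succ _ _ (j + 1), qPoch_succ p p j, qPoch_succ p f j,
    qPoch_succ p (e * p) j, qPoch_succ p (_ / _) j, h, h', h1, h2]
  rw [div_mul_div_comm]
  congr 1 <;> ring

theorem wellPoised_shift_succ {K : Type*} [Field K] {p : K} (hp : p ≠ 0) (a b c d e f : K)
    (j : ℕ) :
    wellPoised p a b c d (e * p) (f / p) (j + 1) = jacksonCert p a b c d e f j *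
      ((1 - a * p ^ (2 * (j + 1))) * p ^ (j + 1) * ((1 - e * p ^ (j + 1)) * (1 - f / p)) /
      ((1 - p ^ (j + 1)) * (1 - a * p ^ (j + 1) / b) * (1 - a * p ^ (j + 1) / c) *
        (1 - a * p ^ (j + 1) / d) * (1 - a / e) * (1 - a * p ^ (j + 2) / f))) := by
  have h (x : K) : a * p / x * p ^ j = a * p ^ (j + 1) / x := by ring
  have h' (x : K) : a * p ^ 2 / x * p ^ j = a * p ^ (j + 2) / x := by ring
  have h1 : e * p * p ^ j = e * p ^ (j + 1) := by ring
  have h2 : p * p ^ j = p ^ (j + 1) := by ring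
  have h3 : a * p / (e * p) = a / e := mul_div_mul_right _ _ hp
  have h4 : a * p / (f / p) = a * p ^ 2 / f := by rw [div_div_eq_mul_div]; ring
  have h5 : a / e * p = a * p / e := by ring
  simp only [wellPoised, jacksonCert, h3, h4, qPoch_succ' p (a / e) j, qPoch_succ' p (f / p) j,
    div_mul_cancel₀ f hp, qPoch_succ p p j, qPoch_succ p (e * p) j, h5,
    qPoch_succ p (a * p / _) j, qPoch_succ p (a * p ^ 2 / _) j, h, h', h1, h2]
  rw [div_mul_div_comm]
  congr 1 <;> ring

theorem wellPoised_succ {K : Type*} [Field K] (p a b c d e f : K) (j : ℕ) :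
    wellPoised p a b c d e f (j + 1) = jacksonCert p a b c d e f j *
      ((1 - a * p ^ (2 * (j + 1))) * p ^ (j + 1) * ((1 - e) * (1 - f * p ^ j)) /
      ((1 - p ^ (j + 1)) * (1 - a * p ^ (j + 1) / b) * (1 - a * p ^ (j + 1) / c) *
        (1 - a * p ^ (j + 1) / d) * (1 - a * p ^ (j + 1) / e) * (1 - a * p / f))) := by
  have h (x : K) : a * p / x * p ^ j = a * p ^ (j + 1) / x := by ring
  have h2 : p * p ^ j = p ^ (j + 1) := by ring
  have h5 : a * p / f * p = a * p ^ 2 / f := by ring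
  simp only [wellPoised, jacksonCert, qPoch_succ' p (a * p / f) j, qPoch_succ' p e j, h5,
    qPoch_succ p p j, qPoch_succ p f j, qPoch_succ p (a * p / _) j, h, h2]
  rw [div_mul_div_comm]
  congr 1 <;> ring

theorem jackson_polynomial_identity {K : Type*} [CommRing K] (a b c d A z : K) :
    A * (b * c * d - A ^ 2) * ((1 - z) * (b - a * z) * (c - a * z) * (d - a * z)) *
        (A - b * c * d * z) * (1 - A * z) +
      (1 - a * z ^ 2) * z * ((b * c * d - A * a * z) * (A - a) * (A - b * c * d * z) *
          ((b - A) * (c - A) * (d - A)) +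
        (b * c - A) * (b * d - A) * (c * d - A) * (b * c * d - A * a) * (A - a * z) *
          (1 - A * z)) =
      A * (b * c * d - A ^ 2) * ((1 - a * z) * (1 - b * z) * (1 - c * z) * (1 - d * z)) *
        (b * c * d - A * a * z) * (A - a * z) := by
  ring

/-- The ratio of the right-hand sides of Jackson's sum for `N + 1` and `N`, where
`A = a p ^ (N + 1)`. -/
def jacksonRatio {K : Type*} [Field K] (b c d A : K) : K :=
  (1 - A) * (1 - A / (b * c)) * (1 - A / (b * d)) * (1 - A / (c * d)) /
    ((1 - A / b) * (1 - A / c) * (1 - A / d) * (1 - A / (b * c * d)))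

/-- The constant in the telescoping proof of Jackson's sum. -/
def jacksonConst {K : Type*} [Field K] (b c d A : K) : K :=
  -(A * (b * c * d - A ^ 2)) / ((b - A) * (c - A) * (d - A) * (b * c * d - A))

section
variable {K : Type*} [Field K] {a b c d A z : K}

theorem jacksonRatio_eq (hb : b ≠ 0) (hc : c ≠ 0) (hd : d ≠ 0) :
    jacksonRatio b c d A = (1 - A) * (b * c - A) * (b * d - A) * (c * d - A) /
      ((b - A) * (c - A) * (d - A) * (b * c * d - A)) := by
  have e (x : K) (hx : x ≠ 0) : 1 - A / x = (x - A) / x := by field_simp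
  rw [jacksonRatio, e b hb, e c hc, e d hd, e _ (mul_ne_zero hb hc), e _ (mul_ne_zero hb hd),
    e _ (mul_ne_zero hc hd), e _ (mul_ne_zero (mul_ne_zero hb hc) hd)]
  field_simp

theorem jackson_step (ha : a ≠ 0) (hb : b ≠ 0) (hc : c ≠ 0)
    (hd : d ≠ 0) (hA : A ≠ 0)
    (hz : 1 - z ≠ 0) (h1 : b - a * z ≠ 0) (h2 : c - a * z ≠ 0) (h3 : d - a * z ≠ 0)
    (h4 : A - b * c * d * z ≠ 0) (h5 : 1 - A * z ≠ 0) (h7 : 1 - A ≠ 0)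
    (g1 : b - A ≠ 0) (g2 : c - A ≠ 0) (g3 : d - A ≠ 0) (g4 : b * c * d - A ≠ 0) :
    jacksonConst b c d A + ((1 - a * z ^ 2) * z * ((1 - A * a / (b * c * d) * z) * (1 - a / A)) /
          ((1 - z) * (1 - a * z / b) * (1 - a * z / c) * (1 - a * z / d) *
            (1 - a / (A * a / (b * c * d))) * (1 - A * z)) -
        jacksonRatio b c d A *
          ((1 - a * z ^ 2) * z * ((1 - A * a / (b * c * d)) * (1 - a * z / A)) /
            ((1 - z) * (1 - a * z / b) * (1 - a * z / c) * (1 - a * z / d) *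
              (1 - a * z / (A * a / (b * c * d))) * (1 - A)))) =
      jacksonConst b c d A *
        ((1 - a * z) * (1 - b * z) * (1 - c * z) * (1 - d * z) *
            (1 - A * a / (b * c * d) * z) * (1 - a * z / A) /
          ((1 - z) * (1 - a * z / b) * (1 - a * z / c) * (1 - a * z / d) *
            (1 - a * z / (A * a / (b * c * d))) * (1 - A * z))) := by
  have hB : b * c * d ≠ 0 := mul_ne_zero (mul_ne_zero hb hc) hd
  have e (x y : K) (hx : x ≠ 0) : 1 - y / x = (x - y) / x := by field_simp
  have e1 : 1 - A * a / (b * c * d) * z = (b * c * d - A * a * z) / (b * c * d) := by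
    field_simp
  have e2 : 1 - a / (A * a / (b * c * d)) = (A - b * c * d) / A := by field_simp
  have e3 : 1 - a * z / (A * a / (b * c * d)) = (A - b * c * d * z) / A := by field_simp
  have g4' : A - b * c * d ≠ 0 := by rwa [← neg_ne_zero, neg_sub]
  rw [jacksonRatio_eq hb hc hd, jacksonConst, e1, e2, e3, e b _ hb, e c _ hc, e d _ hd,
    e A _ hA, e A _ hA, e _ _ hB, ← neg_sub (b * c * d) A]
  generalize hM : (1 - z) * (b - a * z) * (c - a * z) * (d - a * z) = M
  have hM0 : M ≠ 0 := by rw [← hM]; exact mul_ne_zero (mul_ne_zero (mul_ne_zero hz h1) h2) h3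
  have hM' : (1 - z) * ((b - a * z) / b) * ((c - a * z) / c) * ((d - a * z) / d) =
    M / (b * c * d) := by rw [← hM]; field_simp
  rw [hM']
  have key := jackson_polynomial_identity a b c d A z
  rw [hM] at key
  generalize (1 - a * z) * (1 - b * z) * (1 - c * z) * (1 - d * z) = R₁ at key ⊢
  generalize b * c * d = B at *
  generalize hx1 : 1 - A * z = x1 at *
  generalize hx2 : A - B * z = x2 at *
  generalize hx3 : b - A = x3 at *
  generalize hx4 : c - A = x4 at *
  generalize hx5 : d - A = x5 at *
  generalize hx6 : B - A = x6 at *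
  generalize hx7 : 1 - A = x7 at *
  field_simp
  linear_combination -key

variable {p : K}

theorem qPoch_eq_zero {x : K} {i k : ℕ} (hik : i < k) (h : x * p ^ i = 1) : qPoch p x k = 0 :=
  prod_eq_zero (mem_range.2 hik) (by rw [h, sub_self])

theorem jacksonRatio_mul_rhs (N : ℕ) :
    jacksonRatio b c d (a * p ^ (N + 1)) *
        (qPoch p a (N + 1) * qPoch p (a * p / (b * c)) N * qPoch p (a * p / (b * d)) N *
            qPoch p (a * p / (c * d)) N /
          (qPoch p (a * p / b) N * qPoch p (a * p / c) N * qPoch p (a * p / d) N *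
            qPoch p (a * p / (b * c * d)) N)) =
      qPoch p a (N + 2) * qPoch p (a * p / (b * c)) (N + 1) * qPoch p (a * p / (b * d)) (N + 1) *
          qPoch p (a * p / (c * d)) (N + 1) /
        (qPoch p (a * p / b) (N + 1) * qPoch p (a * p / c) (N + 1) * qPoch p (a * p / d) (N + 1) *
          qPoch p (a * p / (b * c * d)) (N + 1)) := by
  have h (x : K) : a * p / x * p ^ N = a * p ^ (N + 1) / x := by ring
  simp only [qPoch_succ p a (N + 1), qPoch_succ p (_ / _) N, h, jacksonRatio]
  rw [div_mul_div_comm]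
  congr 1 <;> ring

/-- Non-vanishing conditions under which Jackson's sum makes sense. -/
structure JacksonAdmissible (p a b c d : K) : Prop where
  p_ne : p ≠ 0
  a_ne : a ≠ 0
  b_ne : b ≠ 0
  c_ne : c ≠ 0
  d_ne : d ≠ 0
  pow_p : ∀ j, p ^ (j + 1) ≠ 1
  pow_a : ∀ j, a * p ^ (j + 1) ≠ 1
  pow_b : ∀ j, a * p ^ (j + 1) ≠ b
  pow_c : ∀ j, a * p ^ (j + 1) ≠ c
  pow_d : ∀ j, a * p ^ (j + 1) ≠ d
  pow_bcd : ∀ j, a * p ^ j ≠ b * c * d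

theorem jackson_telescope (H : JacksonAdmissible p a b c d) {N j : ℕ} (hj : j ≤ N + 1) :
    ∑ k ∈ range (j + 1), (wellPoised p a b c d (a ^ 2 * p ^ (N + 1) / (b * c * d) * p)
          ((p ^ N)⁻¹ / p) k -
        jacksonRatio b c d (a * p ^ (N + 1)) *
          wellPoised p a b c d (a ^ 2 * p ^ (N + 1) / (b * c * d)) (p ^ N)⁻¹ k) =
      jacksonConst b c d (a * p ^ (N + 1)) *
        jacksonCert p a b c d (a ^ 2 * p ^ (N + 1) / (b * c * d)) (p ^ N)⁻¹ j := by
  obtain ⟨hp, ha, hb, hc, hd, hpp, hpa, hpb, hpc, hpd, hpbcd⟩ := H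
  have hA : a * p ^ (N + 1) ≠ 0 := mul_ne_zero ha (pow_ne_zero _ hp)
  induction j with
  | zero =>
    have g1 := sub_ne_zero.2 (hpb N).symm
    have g2 := sub_ne_zero.2 (hpc N).symm
    have g3 := sub_ne_zero.2 (hpd N).symm
    have g4 := sub_ne_zero.2 (hpbcd (N + 1)).symm
    simp only [zero_add, sum_range_one, wellPoised, jacksonCert, qPoch, range_zero, prod_empty,
      prod_range_one, jacksonRatio_eq hb hc hd, jacksonConst]
    field_simp
    ring
  | succ j ih =>
    obtain ⟨i, rfl⟩ := Nat.exists_eq_add_of_le (Nat.succ_le_succ_iff.1 hj)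
    rw [sum_range_succ, ih (by omega), wellPoised_shift_succ hp, wellPoised_succ,
      jacksonCert_succ]
    have e1 : a ^ 2 * p ^ (j + i + 1) / (b * c * d) =
      a * p ^ (j + i + 1) * a / (b * c * d) := by ring
    have e2 : (p ^ (j + i))⁻¹ / p = a / (a * p ^ (j + i + 1)) := by
      field_simp
      ring
    have e3 : (p ^ (j + i))⁻¹ * p ^ j = a * p ^ (j + 1) / (a * p ^ (j + i + 1)) := by
      field_simp
      ring
    have e4 : a * p ^ (j + 2) / (p ^ (j + i))⁻¹ =
      a * p ^ (j + i + 1) * p ^ (j + 1) := by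
      field_simp
      ring
    have e5 : a * p / (p ^ (j + i))⁻¹ = a * p ^ (j + i + 1) := by
      field_simp
      ring
    have e6 : p ^ (2 * (j + 1)) = (p ^ (j + 1)) ^ 2 := by ring
    have key := jackson_step (z := p ^ (j + 1)) ha hb hc hd hA (sub_ne_zero.2 (hpp j).symm)
      (sub_ne_zero.2 (hpb j).symm) (sub_ne_zero.2 (hpc j).symm) (sub_ne_zero.2 (hpd j).symm)
      (sub_ne_zero.2 fun h => hpbcd i (mul_right_cancel₀ (pow_ne_zero (j + 1) hp)
        (h ▸ by ring)))
      (sub_ne_zero.2 fun h => hpa (j + i + 1 + j) (h ▸ by ring))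
      (sub_ne_zero.2 (hpa _).symm) (sub_ne_zero.2 (hpb _).symm) (sub_ne_zero.2 (hpc _).symm)
      (sub_ne_zero.2 (hpd _).symm) (sub_ne_zero.2 (hpbcd _).symm)
    rw [e1, e2, e3, e4, e5, e6]
    rw [mul_left_comm (jacksonConst _ _ _ _), ← key]
    ring

/-- Jackson's `q`-analogue of Dougall's summation: the terminating balanced
very-well-poised `₈φ₇`. -/
theorem jackson_sum (H : JacksonAdmissible p a b c d) (N : ℕ) :
    ∑ k ∈ range (N + 1),
        wellPoised p a b c d (a ^ 2 * p ^ (N + 1) / (b * c * d)) (p ^ N)⁻¹ k =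
      qPoch p a (N + 1) * qPoch p (a * p / (b * c)) N * qPoch p (a * p / (b * d)) N *
          qPoch p (a * p / (c * d)) N /
        (qPoch p (a * p / b) N * qPoch p (a * p / c) N * qPoch p (a * p / d) N *
          qPoch p (a * p / (b * c * d)) N) := by
  have hp := H.p_ne
  induction N with
  | zero => simp [wellPoised, qPoch]
  | succ N ih =>
    have hf : qPoch p (p ^ N)⁻¹ (N + 1) = 0 :=
      qPoch_eq_zero (Nat.lt_succ_self N) (inv_mul_cancel₀ (pow_ne_zero _ hp))
    have hw : wellPoised p a b c d (a ^ 2 * p ^ (N + 1) / (b * c * d)) (p ^ N)⁻¹ (N + 1) = 0 := by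
      simp [wellPoised, hf]
    have e1 : a ^ 2 * p ^ (N + 1 + 1) / (b * c * d) = a ^ 2 * p ^ (N + 1) / (b * c * d) * p := by
      ring
    have e2 : (p ^ (N + 1))⁻¹ = (p ^ N)⁻¹ / p := by rw [pow_succ, mul_inv, div_eq_mul_inv]
    rw [← jacksonRatio_mul_rhs, ← ih, ← add_zero (∑ k ∈ range (N + 1), _), ← hw,
      ← sum_range_succ, mul_sum, ← sub_eq_zero, e1, e2, ← sum_sub_distrib,
      jackson_telescope H le_rfl, jacksonCert, hf]
    simp

end

open Polynomial in
/-- `x` has no pole at `ζ`, and its value there is `y`. -/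
def ReducesTo {L : Type*} [Field L] [Algebra ℚ L] (ζ : L) (x : RatFunc ℚ) (y : L) : Prop :=
  ∃ N D : ℚ[X], aeval ζ D ≠ 0 ∧ x * algebraMap ℚ[X] (RatFunc ℚ) D = algebraMap ℚ[X] (RatFunc ℚ) N ∧
    y * aeval ζ D = aeval ζ N

/-- `x` vanishes to order at least `e` at the roots of the `n`-th cyclotomic polynomial. -/
def VanishesToOrder (n e : ℕ) (x : RatFunc ℚ) : Prop :=
  ∃ N D : Polynomial ℚ, ¬ (Polynomial.cyclotomic n ℚ ∣ D) ∧ (Polynomial.cyclotomic n ℚ) ^ e ∣ N ∧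
    x * algebraMap (Polynomial ℚ) (RatFunc ℚ) D = algebraMap (Polynomial ℚ) (RatFunc ℚ) N

namespace ReducesTo

open Polynomial

variable {L : Type*} [Field L] [Algebra ℚ L] {ζ : L} {x x' : RatFunc ℚ} {y y' : L}

theorem algebraMap (P : ℚ[X]) : ReducesTo ζ (algebraMap ℚ[X] (RatFunc ℚ) P) (aeval ζ P) :=
  ⟨P, 1, by simp, by simp, by simp⟩

theorem one : ReducesTo ζ 1 1 := by simpa using algebraMap (ζ := ζ) 1

theorem qq : ReducesTo ζ qq ζ := by
  simpa [_root_.qq, RatFunc.algebraMap_X] using algebraMap (ζ := ζ) X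

theorem add (h : ReducesTo ζ x y) (h' : ReducesTo ζ x' y') : ReducesTo ζ (x + x') (y + y') := by
  obtain ⟨N, D, hD, hx, hy⟩ := h
  obtain ⟨N', D', hD', hx', hy'⟩ := h'
  refine ⟨N * D' + N' * D, D * D', by simp [hD, hD'], ?_, ?_⟩
  · simp only [map_add, map_mul, ← hx, ← hx']; ring
  · simp only [map_add, map_mul, ← hy, ← hy']; ring

theorem mul (h : ReducesTo ζ x y) (h' : ReducesTo ζ x' y') : ReducesTo ζ (x * x') (y * y') := by
  obtain ⟨N, D, hD, hx, hy⟩ := h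
  obtain ⟨N', D', hD', hx', hy'⟩ := h'
  refine ⟨N * N', D * D', by simp [hD, hD'], ?_, ?_⟩
  · simp only [map_mul, ← hx, ← hx']; ring
  · simp only [map_mul, ← hy, ← hy']; ring

theorem neg (h : ReducesTo ζ x y) : ReducesTo ζ (-x) (-y) := by
  obtain ⟨N, D, hD, hx, hy⟩ := h
  exact ⟨-N, D, hD, by simp [hx], by simp [hy]⟩

theorem sub (h : ReducesTo ζ x y) (h' : ReducesTo ζ x' y') : ReducesTo ζ (x - x') (y - y') := by
  simpa [sub_eq_add_neg] using h.add h'.neg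

theorem ne_zero (h : ReducesTo ζ x y) (hy : y ≠ 0) : x ≠ 0 := by
  rintro rfl
  obtain ⟨N, D, hD, hx, hy'⟩ := h
  rw [zero_mul, eq_comm, map_eq_zero_iff _ (IsFractionRing.injective ℚ[X] (RatFunc ℚ))] at hx
  simp [hx, hy, hD] at hy'

theorem inv (h : ReducesTo ζ x y) (hy : y ≠ 0) : ReducesTo ζ x⁻¹ y⁻¹ := by
  have hx0 := h.ne_zero hy
  obtain ⟨N, D, hD, hx, hy'⟩ := h
  refine ⟨D, N, by rw [← hy']; exact mul_ne_zero hy hD, ?_, ?_⟩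
  · rw [← hx, inv_mul_cancel_left₀ hx0]
  · rw [← hy', inv_mul_cancel_left₀ hy]

theorem div (h : ReducesTo ζ x y) (h' : ReducesTo ζ x' y') (hy : y' ≠ 0) :
    ReducesTo ζ (x / x') (y / y') := by
  simpa [div_eq_mul_inv] using h.mul (h'.inv hy)

theorem pow (h : ReducesTo ζ x y) (k : ℕ) : ReducesTo ζ (x ^ k) (y ^ k) := by
  induction k with
  | zero => simpa using one
  | succ k ih => simpa [pow_succ] using ih.mul h

theorem sum {ι : Type*} {s : Finset ι} {f : ι → RatFunc ℚ} {g : ι → L}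
    (h : ∀ i ∈ s, ReducesTo ζ (f i) (g i)) : ReducesTo ζ (∑ i ∈ s, f i) (∑ i ∈ s, g i) := by
  classical
  induction s using Finset.induction_on with
  | empty => simpa using algebraMap (ζ := ζ) 0
  | insert a s ha ih =>
    rw [sum_insert ha, sum_insert ha]
    exact (h a (by simp)).add (ih fun i hi => h i (by simp [hi]))

theorem prod {ι : Type*} {s : Finset ι} {f : ι → RatFunc ℚ} {g : ι → L}
    (h : ∀ i ∈ s, ReducesTo ζ (f i) (g i)) : ReducesTo ζ (∏ i ∈ s, f i) (∏ i ∈ s, g i) := by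
  classical
  induction s using Finset.induction_on with
  | empty => simpa using one
  | insert a s ha ih =>
    rw [prod_insert ha, prod_insert ha]
    exact (h a (by simp)).mul (ih fun i hi => h i (by simp [hi]))

theorem poch (h : ReducesTo ζ x y) (k : ℕ) : ReducesTo ζ (poch x k) (qPoch (ζ ^ 3) y k) :=
  prod fun i _ => by
    rw [← pow_mul]
    exact one.sub (h.mul (qq.pow _))

end ReducesTo

namespace VanishesToOrder

variable {L : Type*} [Field L] [CharZero L] {ζ : L} {n : ℕ} {e e' : ℕ} {x x' : RatFunc ℚ} {y : L}

theorem cyclotomic_dvd_iff (hζ : IsPrimitiveRoot ζ n) (hn : 0 < n) (P : Polynomial ℚ) :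
    Polynomial.cyclotomic n ℚ ∣ P ↔ Polynomial.aeval ζ P = 0 := by
  rw [Polynomial.cyclotomic_eq_minpoly_rat hζ hn]
  exact minpoly.dvd_iff

theorem not_dvd_mul (hn : 0 < n) {P R : Polynomial ℚ} (hP : ¬ Polynomial.cyclotomic n ℚ ∣ P)
    (hR : ¬ Polynomial.cyclotomic n ℚ ∣ R) : ¬ Polynomial.cyclotomic n ℚ ∣ P * R := fun h =>
  ((Polynomial.cyclotomic.irreducible_rat hn).prime.dvd_or_dvd h).elim hP hR

theorem of_reducesTo (hζ : IsPrimitiveRoot ζ n) (hn : 0 < n) (h : ReducesTo ζ x y) :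
    VanishesToOrder n 0 x := by
  obtain ⟨N, D, hD, hx, -⟩ := h
  exact ⟨N, D, by rwa [cyclotomic_dvd_iff hζ hn], by simp, hx⟩

theorem of_reducesTo_zero (hζ : IsPrimitiveRoot ζ n) (hn : 0 < n) (h : ReducesTo ζ x 0) :
    VanishesToOrder n 1 x := by
  obtain ⟨N, D, hD, hx, h0⟩ := h
  exact ⟨N, D, by rwa [cyclotomic_dvd_iff hζ hn],
    by rw [pow_one, cyclotomic_dvd_iff hζ hn, ← h0, zero_mul], hx⟩

theorem mono (hle : e' ≤ e) (h : VanishesToOrder n e x) : VanishesToOrder n e' x := by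
  obtain ⟨N, D, hD, hN, hx⟩ := h
  exact ⟨N, D, hD, (pow_dvd_pow _ hle).trans hN, hx⟩

theorem add (hn : 0 < n) (h : VanishesToOrder n e x) (h' : VanishesToOrder n e x') :
    VanishesToOrder n e (x + x') := by
  obtain ⟨N, D, hD, hN, hx⟩ := h
  obtain ⟨N', D', hD', hN', hx'⟩ := h'
  refine ⟨N * D' + N' * D, D * D', not_dvd_mul hn hD hD',
    dvd_add (hN.mul_right _) (hN'.mul_right _), ?_⟩
  simp only [map_add, map_mul, ← hx, ← hx']; ring

theorem mul (hn : 0 < n) (h : VanishesToOrder n e x) (h' : VanishesToOrder n e' x') :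
    VanishesToOrder n (e + e') (x * x') := by
  obtain ⟨N, D, hD, hN, hx⟩ := h
  obtain ⟨N', D', hD', hN', hx'⟩ := h'
  refine ⟨N * N', D * D', not_dvd_mul hn hD hD', by rw [pow_add]; exact mul_dvd_mul hN hN', ?_⟩
  simp only [map_mul, ← hx, ← hx']; ring

theorem neg (h : VanishesToOrder n e x) : VanishesToOrder n e (-x) := by
  obtain ⟨N, D, hD, hN, hx⟩ := h
  exact ⟨-N, D, hD, by simpa using hN, by simp [hx]⟩

theorem pow (hn : 0 < n) (h : VanishesToOrder n e x) (k : ℕ) :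
    VanishesToOrder n (e * k) (x ^ k) := by
  obtain ⟨N, D, hD, hN, hx⟩ := h
  refine ⟨N ^ k, D ^ k,
    fun h => hD ((Polynomial.cyclotomic.irreducible_rat hn).prime.dvd_of_dvd_pow h),
    by rw [pow_mul]; exact pow_dvd_pow_of_dvd hN k, by rw [map_pow, map_pow, ← hx, mul_pow]⟩

theorem zero (hn : 0 < n) : VanishesToOrder n e 0 :=
  ⟨0, 1, fun h => (Polynomial.cyclotomic.irreducible_rat hn).not_isUnit (isUnit_of_dvd_one h),
    by simp, by simp⟩

theorem sum (hn : 0 < n) {ι : Type*} {s : Finset ι} {f : ι → RatFunc ℚ}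
    (h : ∀ i ∈ s, VanishesToOrder n e (f i)) : VanishesToOrder n e (∑ i ∈ s, f i) := by
  classical
  induction s using Finset.induction_on with
  | empty => simpa using zero hn
  | insert a s ha ih =>
    rw [sum_insert ha]
    exact (h a (by simp)).add hn (ih fun i hi => h i (by simp [hi]))

end VanishesToOrder

/-- The Koebe function `a / (1 - a)²`. -/
def koebe {K : Type*} [Field K] (a : K) : K := a / (1 - a) ^ 2

theorem koebe_inv {K : Type*} [Field K] {a : K} (ha : a ≠ 0) : koebe a⁻¹ = koebe a := by
  by_cases h : a = 1
  · simp [h]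
  have h1 : 1 - a ≠ 0 := sub_ne_zero.2 (Ne.symm h)
  have h2 : 1 - a⁻¹ = -(1 - a) / a := by field_simp; ring
  rw [koebe, koebe, h2]
  field_simp

/-- The quotient of `(x y; p)_k (x / y; p)_k / (x; p)_k²` by the same expression in `x'`, written
in terms of `t = (1 - y)² / y`. -/
def koebeRatio {K : Type*} [Field K] (p x x' t : K) (k : ℕ) : K :=
  ∏ i ∈ range k, (1 - koebe (x * p ^ i) * t) / (1 - koebe (x' * p ^ i) * t)

theorem koebeRatio_zero {K : Type*} [Field K] (p x x' : K) (k : ℕ) :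
    koebeRatio p x x' 0 k = 1 := by
  simp [koebeRatio]

theorem qPoch_mul_qPoch_div {K : Type*} [Field K] {p x y : K} (hy : y ≠ 0)
    (hx : ∀ i, x * p ^ i ≠ 1) (k : ℕ) :
    qPoch p (x * y) k * qPoch p (x / y) k =
      qPoch p x k ^ 2 * ∏ i ∈ range k, (1 - koebe (x * p ^ i) * ((1 - y) ^ 2 / y)) := by
  simp only [qPoch, ← prod_mul_distrib, ← prod_pow]
  refine prod_congr rfl fun i _ => ?_
  have h := sub_ne_zero.2 (hx i).symm
  have e1 : x * y * p ^ i = x * p ^ i * y := by ring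
  have e2 : x / y * p ^ i = x * p ^ i / y := by ring
  rw [koebe, e1, e2]
  generalize x * p ^ i = a at *
  field_simp
  ring

theorem poch_eq_qPoch (x : RatFunc ℚ) (k : ℕ) : poch x k = qPoch (qq ^ 3) x k := by
  simp only [poch, qPoch, pow_mul]

theorem qq_ne_zero : qq ≠ 0 := RatFunc.X_ne_zero

theorem qq_pow_injective : Function.Injective (qq ^ · : ℕ → RatFunc ℚ) := fun i j h => by
  have h' : algebraMap (Polynomial ℚ) (RatFunc ℚ) (Polynomial.X ^ i) =
      algebraMap (Polynomial ℚ) (RatFunc ℚ) (Polynomial.X ^ j) := by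
    simpa [RatFunc.algebraMap_X, qq] using h
  simpa using congrArg Polynomial.natDegree
    (IsFractionRing.injective (Polynomial ℚ) (RatFunc ℚ) h')

theorem qq_pow_ne_one {i : ℕ} (hi : i ≠ 0) : qq ^ i ≠ 1 := fun h =>
  hi (qq_pow_injective (by simpa using h))

theorem one_sub_qq_mul_qint (s : ℕ) : (1 - qq) * qint s = 1 - qq ^ s :=
  mul_div_cancel₀ _ (sub_ne_zero.2 (by simpa using (qq_pow_ne_one one_ne_zero).symm))

theorem jacksonAdmissible_qq {y : RatFunc ℚ} (hy : y ≠ 0) (h1 : ∀ j, y ≠ qq ^ (3 * (j + 1)))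
    (h2 : ∀ j, y * qq ^ (3 * (j + 1)) ≠ 1) :
    JacksonAdmissible (qq ^ 3) qq (qq * y) (qq / y) qq where
  p_ne := pow_ne_zero _ qq_ne_zero
  a_ne := qq_ne_zero
  b_ne := mul_ne_zero qq_ne_zero hy
  c_ne := div_ne_zero qq_ne_zero hy
  d_ne := qq_ne_zero
  pow_p j := by rw [← pow_mul]; exact qq_pow_ne_one (by omega)
  pow_a j := by rw [← pow_mul, ← pow_succ']; exact qq_pow_ne_one (by omega)
  pow_b j h := h1 j (by rw [pow_mul]; exact (mul_left_cancel₀ qq_ne_zero h).symm)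
  pow_c j h := h2 j (by
    rw [← pow_mul, eq_div_iff hy, mul_assoc] at h
    rw [mul_comm]
    exact mul_left_cancel₀ qq_ne_zero (by rw [h, mul_one]))
  pow_d j h := by
    rw [← pow_mul, ← pow_succ'] at h
    have := qq_pow_injective (a₁ := 3 * (j + 1) + 1) (a₂ := 1) (by simpa using h)
    omega
  pow_bcd j h := by
    have h' : qq * y * (qq / y) * qq = qq ^ 3 := by field_simp
    rw [h', ← pow_mul, ← pow_succ'] at h
    have := qq_pow_injective h
    omega

theorem sum_Aq_mul_koebeRatio {y : RatFunc ℚ} (hy : y ≠ 0) (h1 : ∀ j, y ≠ qq ^ (3 * (j + 1)))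
    (h2 : ∀ j, y * qq ^ (3 * (j + 1)) ≠ 1) (m : ℕ) :
    ∑ k ∈ range (m + 1), Aq k * koebeRatio (qq ^ 3) qq (qq ^ 3) ((1 - y) ^ 2 / y) k *
        koebeRatio (qq ^ 3) qq (qq ^ 3) ((1 - qq ^ (3 * m + 1)) ^ 2 / qq ^ (3 * m + 1)) k =
      qint (3 * m + 1) * (poch (qq ^ 2) m / poch (qq ^ 3) m) ^ 3 *
        koebeRatio (qq ^ 3) (qq ^ 2) (qq ^ 3) ((1 - y) ^ 2 / y) m := by
  have J := jackson_sum (jacksonAdmissible_qq hy h1 h2) m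
  have hq := qq_ne_zero
  have hQ : qq ^ (3 * m + 1) ≠ 0 := pow_ne_zero _ hq
  have hne (s : ℕ) (hs : s ≠ 0) (i : ℕ) : qq ^ s * (qq ^ 3) ^ i ≠ 1 := by
    rw [← pow_mul, ← pow_add]; exact qq_pow_ne_one (by omega)
  have hne1 (i : ℕ) : qq * (qq ^ 3) ^ i ≠ 1 := by simpa using hne 1 one_ne_zero i
  have e1 : qq ^ 2 * (qq ^ 3) ^ (m + 1) / (qq * y * (qq / y) * qq) = qq * qq ^ (3 * m + 1) := by
    field_simp; ring
  have e2 : ((qq ^ 3) ^ m)⁻¹ = qq / qq ^ (3 * m + 1) := by field_simp; ring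
  have e3 : qq * qq ^ 3 / (qq * y) = qq ^ 3 / y := by field_simp
  have e4 : qq * qq ^ 3 / (qq / y) = qq ^ 3 * y := by field_simp
  have e5 : qq * qq ^ 3 / qq = qq ^ 3 := by field_simp
  have e6 : qq * qq ^ 3 / (qq * qq ^ (3 * m + 1)) = qq ^ 3 / qq ^ (3 * m + 1) := by field_simp
  have e7 : qq * qq ^ 3 / (qq / qq ^ (3 * m + 1)) = qq ^ 3 * qq ^ (3 * m + 1) := by field_simp
  have e8 : qq * qq ^ 3 / (qq * y * (qq / y)) = qq ^ 2 := by field_simp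
  have e9 : qq * qq ^ 3 / (qq * y * qq) = qq ^ 2 / y := by field_simp
  have e10 : qq * qq ^ 3 / (qq / y * qq) = qq ^ 2 * y := by field_simp
  have e11 : qq * qq ^ 3 / (qq * y * (qq / y) * qq) = qq := by field_simp
  have hq1 : (1 : RatFunc ℚ) - qq ≠ 0 :=
    sub_ne_zero.2 (by simpa using (qq_pow_ne_one one_ne_zero).symm)
  refine mul_left_cancel₀ hq1 ?_
  rw [e1, e2, e3, e4, e5, e8, e9, e10, e11] at J
  rw [mul_sum]
  refine (sum_congr rfl fun k _ => ?_).trans (J.trans ?_)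
  · have f1 := qPoch_mul_qPoch_div hy hne1 k
    have f2 := qPoch_mul_qPoch_div hQ hne1 k
    have f3 := qPoch_mul_qPoch_div hy (hne 3 (by norm_num)) k
    have f4 := qPoch_mul_qPoch_div hQ (hne 3 (by norm_num)) k
    have f5 := one_sub_qq_mul_qint (6 * k + 1)
    have f6 : (1 : RatFunc ℚ) - qq * (qq ^ 3) ^ (2 * k) = 1 - qq ^ (6 * k + 1) := by
      rw [← pow_mul, ← pow_succ']; ring_nf
    rw [wellPoised, e3, e4, e5, e6, e7, f6, ← f5, Aq, koebeRatio, koebeRatio, prod_div_distrib,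
      prod_div_distrib, poch_eq_qPoch, poch_eq_qPoch, pow_mul qq 3 k]
    have g1 : ∀ P a b c d : RatFunc ℚ, P * a * b * P * c * d = P ^ 2 * (a * b) * (c * d) := by
      intros; ring
    have g2 : ∀ P a b c d : RatFunc ℚ, P * a * b * P * c * d = P ^ 2 * (b * a) * (d * c) := by
      intros; ring
    rw [g1, f1, f2, g2, f3, f4]
    ring
  · have f1 := qPoch_mul_qPoch_div hy (hne 2 (by norm_num)) m
    have f3 := qPoch_mul_qPoch_div hy (hne 3 (by norm_num)) m
    have f5 := one_sub_qq_mul_qint (3 * m + 1)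
    have f6 : qPoch (qq ^ 3) qq m ≠ 0 :=
      prod_ne_zero_iff.2 fun i _ => sub_ne_zero.2 (hne1 i).symm
    have f7 : qPoch (qq ^ 3) qq (m + 1) = qPoch (qq ^ 3) qq m * (1 - qq ^ (3 * m + 1)) := by
      rw [qPoch_succ, ← pow_mul, ← pow_succ']
    rw [koebeRatio, prod_div_distrib, poch_eq_qPoch, poch_eq_qPoch, f7, ← f5]
    have g1 : ∀ P z P2 P3 a b a' b' : RatFunc ℚ, P * z * P2 * a * b / (a' * b' * P3 * P) =
        P / P * (z * P2 * (b * a) / (P3 * (b' * a'))) := by intros; ring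
    rw [g1, f1, f3, div_self f6]
    ring

theorem exists_prod_expansion {L : Type*} [Field L] [Algebra ℚ L] {ζ : L} {t : RatFunc ℚ}
    (ht : ReducesTo ζ t 0) {α β : ℕ → RatFunc ℚ} {α' β' : ℕ → L} (k : ℕ)
    (hα : ∀ i < k, ReducesTo ζ (α i) (α' i)) (hβ : ∀ i < k, ReducesTo ζ (β i) (β' i)) :
    ∃ h h', ReducesTo ζ h h' ∧ ∏ i ∈ range k, (1 - α i * t) / (1 - β i * t) =
      1 + t * ∑ i ∈ range k, (β i - α i) + t ^ 2 * h := by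
  induction k with
  | zero => exact ⟨0, 0, by simpa using ReducesTo.algebraMap (ζ := ζ) 0, by simp⟩
  | succ k ih =>
    obtain ⟨h, h', hh, hp⟩ := ih (fun i hi => hα i (by omega)) (fun i hi => hβ i (by omega))
    have hs := ReducesTo.sum (s := range k) fun i hi =>
      (hβ i (by have := mem_range.1 hi; omega)).sub (hα i (by have := mem_range.1 hi; omega))
    have ha := hα k (by omega)
    have hb := hβ k (by omega)
    have hd := ReducesTo.one.sub (hb.mul ht)
    have hd1 : 1 - β' k * 0 ≠ 0 := by simp
    have hv := (hb.sub ha).div hd hd1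
    have hv1 := div_mul_cancel₀ (β k - α k) (hd.ne_zero hd1)
    have hfac : (1 - α k * t) / (1 - β k * t) = 1 + t * ((β k - α k) / (1 - β k * t)) := by
      rw [div_eq_iff (hd.ne_zero hd1)]
      linear_combination -t * hv1
    refine ⟨_, _, (hh.add (hs.mul hv)).add ((hb.mul hv).add ((ht.mul hh).mul hv)), ?_⟩
    rw [prod_range_succ, hp, sum_range_succ, hfac]
    linear_combination t * hv1

section

variable {L : Type*} [Field L] {ζ : L} {m : ℕ}

theorem cube_mul_cube_pow_ne_one (hζ : IsPrimitiveRoot ζ (3 * m + 1)) {i : ℕ} (hi : i < 3 * m) :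
    ζ ^ 3 * (ζ ^ 3) ^ i ≠ 1 := by
  rw [← pow_succ', ← pow_mul, Ne, hζ.pow_eq_one_iff_dvd]
  intro h
  have hc : Nat.Coprime (3 * m + 1) 3 := by simp
  have := Nat.le_of_dvd (Nat.succ_pos i) (hc.dvd_of_dvd_mul_left h)
  omega

theorem pow_mul_cube_pow_ne_one (hζ : IsPrimitiveRoot ζ (3 * m + 1)) {s i : ℕ} (hs : 0 < s)
    (hi : s + 3 * i < 3 * m + 1) : ζ ^ s * (ζ ^ 3) ^ i ≠ 1 := by
  rw [← pow_mul, ← pow_add]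
  exact hζ.pow_ne_one_of_pos_of_lt (by omega) hi

theorem mul_cube_pow_ne_one (hζ : IsPrimitiveRoot ζ (3 * m + 1)) {i : ℕ} (hi : i < m) :
    ζ * (ζ ^ 3) ^ i ≠ 1 := by
  simpa using pow_mul_cube_pow_ne_one (s := 1) hζ one_pos (by omega : 1 + 3 * i < 3 * m + 1)

theorem qPoch_cube_ne_zero (hζ : IsPrimitiveRoot ζ (3 * m + 1)) {k : ℕ} (hk : k ≤ 3 * m) :
    qPoch (ζ ^ 3) (ζ ^ 3) k ≠ 0 :=
  prod_ne_zero_iff.2 fun i hi =>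
    sub_ne_zero.2 (cube_mul_cube_pow_ne_one hζ (by have := mem_range.1 hi; omega)).symm

theorem qPoch_mul_qPoch_cube (hζ : ζ ^ (3 * m + 1) = 1) {k j : ℕ} (h : k + j = m) :
    qPoch (ζ ^ 3) ζ k * qPoch (ζ ^ 3) (ζ ^ 3) j =
      (∏ i ∈ range k, -ζ ^ (3 * i + 1)) * qPoch (ζ ^ 3) (ζ ^ 3) m := by
  induction k generalizing j with
  | zero => simp [qPoch, ← h]
  | succ k ih =>
    have e : ζ ^ (3 * k + 1) * ζ ^ (3 * j + 3) = 1 := by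
      rw [← pow_add, ← hζ]; congr 1; omega
    rw [prod_range_succ, mul_right_comm, ← ih (j := j + 1) (by omega), qPoch_succ, qPoch_succ,
      ← pow_mul, ← pow_succ', ← pow_mul, ← pow_add, add_comm 3]
    linear_combination (-qPoch (ζ ^ 3) ζ k * qPoch (ζ ^ 3) (ζ ^ 3) j) * e

theorem sum_koebe_add_sum_koebe (h0 : ζ ≠ 0) (hζ : ζ ^ (3 * m + 1) = 1) {k j : ℕ}
    (h : k + j = m) :
    ∑ i ∈ range k, koebe (ζ * (ζ ^ 3) ^ i) + ∑ i ∈ range j, koebe (ζ ^ 3 * (ζ ^ 3) ^ i) =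
      ∑ i ∈ range m, koebe (ζ ^ 3 * (ζ ^ 3) ^ i) := by
  induction k generalizing j with
  | zero => simp [← h]
  | succ k ih =>
    have e : ζ * (ζ ^ 3) ^ k = (ζ ^ 3 * (ζ ^ 3) ^ j)⁻¹ := by
      refine eq_inv_of_mul_eq_one_left ?_
      rw [← hζ, ← h]
      ring
    rw [sum_range_succ, e, koebe_inv (by simp [h0]), ← ih (j := j + 1) (by omega),
      sum_range_succ _ j]
    ring

theorem prod_neg_pow_sq (ζ : L) (k : ℕ) :
    (∏ i ∈ range k, -ζ ^ (3 * i + 1)) ^ 2 * ζ ^ k = ζ ^ (3 * k ^ 2) := by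
  induction k with
  | zero => simp
  | succ k ih =>
    rw [prod_range_succ, mul_pow, show ζ ^ (3 * (k + 1) ^ 2) = ζ ^ (3 * k ^ 2) * ζ ^ (6 * k + 3) by
      rw [← pow_add]; ring_nf, ← ih]
    ring

/-- The value of `A_q(k)` at `q = ζ`. -/
def Aval (ζ : L) (k : ℕ) : L :=
  (1 - ζ ^ (6 * k + 1)) / (1 - ζ) * qPoch (ζ ^ 3) ζ k ^ 6 / qPoch (ζ ^ 3) (ζ ^ 3) k ^ 6 *
    ζ ^ (3 * k)

theorem Aval_eq (hζ : IsPrimitiveRoot ζ (3 * m + 1)) {k j : ℕ} (h : k + j = m) :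
    Aval ζ k = (1 - ζ ^ (6 * k + 1)) * ζ ^ (9 * k ^ 2) * (qPoch (ζ ^ 3) (ζ ^ 3) m ^ 6 /
      ((1 - ζ) * (qPoch (ζ ^ 3) (ζ ^ 3) k * qPoch (ζ ^ 3) (ζ ^ 3) j) ^ 6)) := by
  have e := qPoch_mul_qPoch_cube hζ.pow_eq_one h
  have hj := qPoch_cube_ne_zero hζ (k := j) (by omega)
  rw [← eq_div_iff hj] at e
  have e2 : ζ ^ (9 * k ^ 2) = (∏ i ∈ range k, -ζ ^ (3 * i + 1)) ^ 6 * ζ ^ (3 * k) := by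
    rw [show 9 * k ^ 2 = 3 * k ^ 2 * 3 by ring, pow_mul, ← prod_neg_pow_sq]
    ring
  rw [Aval, e, e2]
  generalize 1 - ζ = w
  ring

theorem Aval_antisymm (hζ : IsPrimitiveRoot ζ (3 * m + 1)) {k j : ℕ} (h : k + j = m) :
    Aval ζ j = -Aval ζ k := by
  have h1 : ζ ^ (9 * j ^ 2) = ζ ^ (9 * k ^ 2) * ζ ^ (6 * k + 1) := by
    have e1 : ζ ^ (9 * j ^ 2) * (ζ ^ (3 * m + 1)) ^ (6 * k + 2) =
        (ζ ^ (3 * m + 1)) ^ (3 * m + 1) * (ζ ^ (9 * k ^ 2) * ζ ^ (6 * k + 1)) := by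
      subst h
      ring
    simpa [hζ.pow_eq_one] using e1
  have h2 : ζ ^ (6 * j + 1) * ζ ^ (6 * k + 1) = 1 := by
    have e1 : ζ ^ (6 * j + 1) * ζ ^ (6 * k + 1) = (ζ ^ (3 * m + 1)) ^ 2 := by
      subst h
      ring
    rw [e1, hζ.pow_eq_one, one_pow]
  rw [Aval_eq hζ h, Aval_eq hζ ((add_comm j k).trans h), h1,
    mul_comm (qPoch _ _ j) (qPoch _ _ k), ← neg_mul]
  congr 1
  linear_combination (-ζ ^ (9 * k ^ 2)) * h2

theorem sum_Aval_mul_sq [CharZero L] (hζ : IsPrimitiveRoot ζ (3 * m + 1)) :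
    ∑ k ∈ range (m + 1), Aval ζ k *
      (∑ i ∈ range k, (koebe (ζ ^ 3 * (ζ ^ 3) ^ i) - koebe (ζ * (ζ ^ 3) ^ i))) ^ 2 = 0 := by
  have h0 : ζ ≠ 0 := hζ.ne_zero (by omega)
  refine self_eq_neg.1 ?_
  conv_lhs => rw [← sum_range_reflect]
  rw [← sum_neg_distrib]
  refine sum_congr rfl fun k hk => ?_
  obtain ⟨j, rfl⟩ := Nat.exists_eq_add_of_le (Nat.lt_succ_iff.1 (mem_range.1 hk))
  rw [show k + j + 1 - 1 - k = j by omega, Aval_antisymm hζ rfl, neg_mul]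
  congr 3
  simp only [sum_sub_distrib]
  linear_combination sum_koebe_add_sum_koebe h0 hζ.pow_eq_one (rfl : k + j = k + j) -
    sum_koebe_add_sum_koebe h0 hζ.pow_eq_one (add_comm j k)

end

section

variable {L : Type*} [Field L] [CharZero L] {ζ : L} {m : ℕ}

theorem ReducesTo.koebe {x : RatFunc ℚ} {y : L} (h : ReducesTo ζ x y) (hy : y ≠ 1) :
    ReducesTo ζ (koebe x) (koebe y) :=
  h.div ((ReducesTo.one.sub h).pow 2) (pow_ne_zero _ (sub_ne_zero.2 hy.symm))

theorem reducesTo_pow_mul_cube_pow (ζ : L) (s i : ℕ) :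
    ReducesTo ζ (qq ^ s * (qq ^ 3) ^ i) (ζ ^ s * (ζ ^ 3) ^ i) :=
  (ReducesTo.qq.pow s).mul ((ReducesTo.qq.pow 3).pow i)

theorem reducesTo_qint (h1 : ζ ≠ 1) (s : ℕ) :
    ReducesTo ζ (qint s) ((1 - ζ ^ s) / (1 - ζ)) :=
  (ReducesTo.one.sub (ReducesTo.qq.pow s)).div (ReducesTo.one.sub ReducesTo.qq)
    (sub_ne_zero.2 h1.symm)

theorem reducesTo_Aq (hζ : IsPrimitiveRoot ζ (3 * m + 1)) (h1 : ζ ≠ 1) {k : ℕ} (hk : k ≤ 3 * m) :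
    ReducesTo ζ (Aq k) (Aval ζ k) :=
  (((reducesTo_qint h1 _).mul ((ReducesTo.qq.poch k).pow 6)).div
    (((ReducesTo.qq.pow 3).poch k).pow 6) (pow_ne_zero _ (qPoch_cube_ne_zero hζ hk))).mul
    (ReducesTo.qq.pow _)

theorem vanishes_one_sub (hζ : IsPrimitiveRoot ζ (3 * m + 1)) :
    VanishesToOrder (3 * m + 1) 1 (1 - qq ^ (3 * m + 1)) :=
  .of_reducesTo_zero hζ (by omega) (by
    simpa [hζ.pow_eq_one] using ReducesTo.one.sub (ReducesTo.qq (ζ := ζ).pow (3 * m + 1)))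

theorem vanishes_Aq (hζ : IsPrimitiveRoot ζ (3 * m + 1)) (h1 : ζ ≠ 1) {k : ℕ} (hmk : m < k)
    (hk : k ≤ 3 * m) : VanishesToOrder (3 * m + 1) 6 (Aq k) := by
  have hn : 0 < 3 * m + 1 := by omega
  have hp : VanishesToOrder (3 * m + 1) 1 (poch qq k) := by
    have h := ReducesTo.qq (ζ := ζ).poch k
    have : qPoch (ζ ^ 3) ζ k = 0 := qPoch_eq_zero hmk (by
      rw [← pow_mul, ← pow_succ', hζ.pow_eq_one])
    exact .of_reducesTo_zero hζ hn (this ▸ h)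
  have hr := ((reducesTo_qint h1 (6 * k + 1)).div (((ReducesTo.qq.pow 3).poch k).pow 6)
    (pow_ne_zero _ (qPoch_cube_ne_zero hζ hk))).mul (ReducesTo.qq.pow (3 * k))
  have e : Aq k = poch qq k ^ 6 *
      (qint (6 * k + 1) / poch (qq ^ 3) k ^ 6 * qq ^ (3 * k)) := by
    rw [Aq]; ring
  have h := (hp.pow hn 6).mul hn (VanishesToOrder.of_reducesTo hζ hn hr)
  rwa [← e] at h

theorem vanishes_sum_sub_sq (hζ : IsPrimitiveRoot ζ (3 * m + 1)) (h1 : ζ ≠ 1) :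
    VanishesToOrder (3 * m + 1) 6
      ((∑ i ∈ range (3 * m + 1), ∑ j ∈ range (3 * m + 1 - i), Aq i * Aq j) -
        (∑ k ∈ range (m + 1), Aq k) ^ 2) := by
  have hn : 0 < 3 * m + 1 := by omega
  have e1 : ∀ i, range (3 * m + 1 - i) = (range (3 * m + 1)).filter (· < 3 * m + 1 - i) := by
    intro i; ext j; simp; omega
  have e2 : range (m + 1) = (range (3 * m + 1)).filter (· < m + 1) := by
    ext j; simp; omega
  rw [e2, sq, sum_mul_sum]
  simp only [e1, sum_filter, ← sum_sub_distrib]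
  refine .sum hn fun i hi => ?_
  by_cases him : i < m + 1
  · rw [if_pos him, ← sum_sub_distrib]
    refine .sum hn fun j hj => ?_
    have hj' := mem_range.1 hj
    by_cases hjm : j < m + 1
    · rw [if_pos (by omega), if_pos hjm, sub_self]
      exact .zero hn
    · rw [if_neg hjm, sub_zero]
      split_ifs
      · exact ((VanishesToOrder.of_reducesTo hζ hn (reducesTo_Aq hζ h1 (by omega))).mul hn
          (vanishes_Aq hζ h1 (by omega) (by omega))).mono (by norm_num)
      · exact .zero hn
  · rw [if_neg him, sub_zero]
    refine .sum hn fun j hj => ?_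
    have hi' := mem_range.1 hi
    have hj' := mem_range.1 hj
    split_ifs
    · exact ((vanishes_Aq hζ h1 (by omega) (by omega)).mul hn
        (VanishesToOrder.of_reducesTo hζ hn (reducesTo_Aq hζ h1 (by omega)))).mono (by norm_num)
    · exact .zero hn

theorem vanishes_delta (hζ : IsPrimitiveRoot ζ (3 * m + 1)) :
    VanishesToOrder (3 * m + 1) 2 ((1 - qq ^ (3 * m + 1)) ^ 2 / qq ^ (3 * m + 1)) := by
  have hn : 0 < 3 * m + 1 := by omega
  have hq := (ReducesTo.qq (ζ := ζ).pow (3 * m + 1)).inv (by simp [hζ.pow_eq_one])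
  have h := ((vanishes_one_sub hζ).pow hn 2).mul hn (VanishesToOrder.of_reducesTo hζ hn hq)
  rwa [← div_eq_mul_inv] at h

theorem exists_sum_Aq_eq (hζ : IsPrimitiveRoot ζ (3 * m + 1)) (h1 : ζ ≠ 1) :
    ∃ h E, VanishesToOrder (3 * m + 1) 0 h ∧ VanishesToOrder (3 * m + 1) 5 E ∧
      ∑ k ∈ range (m + 1), Aq k =
        qint (3 * m + 1) * (poch (qq ^ 2) m / poch (qq ^ 3) m) ^ 3 *
          (1 - (1 - qq ^ (3 * m + 1)) ^ 2 / qq ^ (3 * m + 1) *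
              ∑ i ∈ range m, (koebe (qq ^ 3 * (qq ^ 3) ^ i) - koebe (qq ^ 2 * (qq ^ 3) ^ i)) -
            ((1 - qq ^ (3 * m + 1)) ^ 2 / qq ^ (3 * m + 1)) ^ 2 * h) + E := by
  have hn : 0 < 3 * m + 1 := by omega
  have J1 := sum_Aq_mul_koebeRatio one_ne_zero (fun j => (qq_pow_ne_one (by omega)).symm)
    (fun j => by rw [one_mul]; exact qq_pow_ne_one (by omega)) m
  have J2 := sum_Aq_mul_koebeRatio (y := qq ^ (3 * m + 1)) (pow_ne_zero _ qq_ne_zero)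
    (fun j h => by have := qq_pow_injective h; omega)
    (fun j => by rw [← pow_add]; exact qq_pow_ne_one (by omega)) m
  have hδ := vanishes_delta hζ
  have hδ0 : ReducesTo ζ ((1 - qq ^ (3 * m + 1)) ^ 2 / qq ^ (3 * m + 1)) 0 := by
    have hq := ReducesTo.qq (ζ := ζ).pow (3 * m + 1)
    simpa [hζ.pow_eq_one] using ((ReducesTo.one.sub hq).pow 2).div hq (by simp [hζ.pow_eq_one])
  generalize (1 - qq ^ (3 * m + 1)) ^ 2 / qq ^ (3 * m + 1) = t at *
  simp only [sub_self, ne_eq, OfNat.ofNat_ne_zero, not_false_eq_true, zero_pow, zero_div,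
    koebeRatio_zero, mul_one] at J1
  have hb (i : ℕ) (hi : i < m) : ReducesTo ζ (koebe (qq ^ 3 * (qq ^ 3) ^ i))
      (koebe (ζ ^ 3 * (ζ ^ 3) ^ i)) :=
    (reducesTo_pow_mul_cube_pow ζ 3 i).koebe (cube_mul_cube_pow_ne_one hζ (by omega))
  have ha (i : ℕ) (hi : i < m) : ReducesTo ζ (koebe (qq * (qq ^ 3) ^ i))
      (koebe (ζ * (ζ ^ 3) ^ i)) :=
    (by simpa using reducesTo_pow_mul_cube_pow ζ 1 i :
      ReducesTo ζ (qq * (qq ^ 3) ^ i) _).koebe (mul_cube_pow_ne_one hζ hi)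
  have ha2 (i : ℕ) (hi : i < m) : ReducesTo ζ (koebe (qq ^ 2 * (qq ^ 3) ^ i))
      (koebe (ζ ^ 2 * (ζ ^ 3) ^ i)) :=
    (reducesTo_pow_mul_cube_pow ζ 2 i).koebe
      (pow_mul_cube_pow_ne_one hζ two_pos (by omega))
  obtain ⟨h, h', hh, hW⟩ := exists_prod_expansion hδ0 m ha2 hb
  have hw (k : ℕ) (hk : k ≤ m) : ∃ g, ReducesTo ζ g
      (∑ i ∈ range k, (koebe (ζ ^ 3 * (ζ ^ 3) ^ i) - koebe (ζ * (ζ ^ 3) ^ i))) ∧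
      koebeRatio (qq ^ 3) qq (qq ^ 3) t k = 1 + t * g := by
    obtain ⟨g, g', hg, hr⟩ := exists_prod_expansion hδ0 k (fun i hi => ha i (by omega))
      (fun i hi => hb i (by omega))
    have hs := ReducesTo.sum (s := range k) fun i hi =>
      (hb i (by have := mem_range.1 hi; omega)).sub (ha i (by have := mem_range.1 hi; omega))
    have hsg := hs.add (hδ0.mul hg)
    rw [zero_mul, add_zero] at hsg
    refine ⟨_, hsg, ?_⟩
    rw [koebeRatio, hr]
    ring
  choose! g hg hwg using hw
  have hE : ReducesTo ζ (∑ k ∈ range (m + 1), Aq k * g k ^ 2) 0 := by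
    rw [← sum_Aval_mul_sq hζ]
    refine ReducesTo.sum fun k hk => ?_
    have hk' := mem_range.1 hk
    exact (reducesTo_Aq hζ h1 (by omega)).mul ((hg k (by omega)).pow 2)
  refine ⟨h, t ^ 2 * ∑ k ∈ range (m + 1), Aq k * g k ^ 2, .of_reducesTo hζ hn hh,
    ((hδ.pow hn 2).mul hn (VanishesToOrder.of_reducesTo_zero hζ hn hE)).mono (by norm_num), ?_⟩
  have e : t ^ 2 * ∑ k ∈ range (m + 1), Aq k * g k ^ 2 =
      ∑ k ∈ range (m + 1), Aq k * koebeRatio (qq ^ 3) qq (qq ^ 3) t k *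
          koebeRatio (qq ^ 3) qq (qq ^ 3) t k -
        2 * ∑ k ∈ range (m + 1), Aq k * koebeRatio (qq ^ 3) qq (qq ^ 3) t k +
      ∑ k ∈ range (m + 1), Aq k := by
    rw [mul_sum, mul_sum, ← sum_sub_distrib, ← sum_add_distrib]
    refine sum_congr rfl fun k hk => ?_
    rw [hwg k (Nat.lt_succ_iff.1 (mem_range.1 hk))]
    ring
  rw [e, J1, J2, koebeRatio, hW]
  ring

theorem koebe_sum_eq_qint_sum (m n : ℕ) :
    qint n ^ 2 * ∑ r ∈ Icc 1 m,
        (qq ^ (3 * r - 1) / qint (3 * r - 1) ^ 2 - qq ^ (3 * r) / qint (3 * r) ^ 2) =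
      (1 - qq ^ n) ^ 2 *
        -∑ i ∈ range m, (koebe (qq ^ 3 * (qq ^ 3) ^ i) - koebe (qq ^ 2 * (qq ^ 3) ^ i)) := by
  have hq1 : (1 : RatFunc ℚ) - qq ≠ 0 :=
    sub_ne_zero.2 (by simpa using (qq_pow_ne_one one_ne_zero).symm)
  have hk (s : ℕ) : qint n ^ 2 * (qq ^ s / qint s ^ 2) = (1 - qq ^ n) ^ 2 * koebe (qq ^ s) := by
    simp only [qint, koebe, div_pow]
    field_simp
  have hIcc : Icc 1 m = Ico (0 + 1) (m + 1) := by ext; simp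
  rw [hIcc, ← sum_Ico_add', ← range_eq_Ico, ← sum_neg_distrib, mul_sum, mul_sum]
  refine sum_congr rfl fun i _ => ?_
  rw [mul_sub, hk, hk, ← pow_mul, ← pow_add, ← pow_add, show 3 * (i + 1) - 1 = 2 + 3 * i by omega,
    show 3 * (i + 1) = 3 + 3 * i by ring]
  ring

theorem vanishes_sq_sub {n : ℕ} (hn : 0 < n) {J Q t s h E : RatFunc ℚ}
    (hJ : VanishesToOrder n 1 J) (ht : VanishesToOrder n 2 t) (hQ : VanishesToOrder n 0 Q)
    (hQ0 : Q ≠ 0) (hs : VanishesToOrder n 0 s) (hh : VanishesToOrder n 0 h)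
    (hE : VanishesToOrder n 5 E) (htQ : t = (1 - Q) ^ 2 / Q) :
    VanishesToOrder n 6 ((J * (1 - t * s - t ^ 2 * h) + E) ^ 2 -
      J ^ 2 * (1 + 2 * (2 - Q) * ((1 - Q) ^ 2 * -s))) := by
  have htQ' : (1 - Q) ^ 2 * (2 - Q) = t - t ^ 2 * Q := by
    rw [htQ]
    field_simp
    ring
  have e : (J * (1 - t * s - t ^ 2 * h) + E) ^ 2 -
      J ^ 2 * (1 + 2 * (2 - Q) * ((1 - Q) ^ 2 * -s)) =
      E * E + (J * E * (1 + -(t * s) + -(t ^ 2 * h)) + J * E * (1 + -(t * s) + -(t ^ 2 * h))) +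
        J ^ 2 * t ^ 2 * (s * s + (t * s * h + t * s * h) + t ^ 2 * (h * h) +
          -(h + h) + -(Q * s + Q * s)) := by
    linear_combination 2 * J ^ 2 * s * htQ'
  have h1 : VanishesToOrder n 0 (1 : RatFunc ℚ) :=
    ⟨1, 1, fun h => (Polynomial.cyclotomic.irreducible_rat hn).not_isUnit (isUnit_of_dvd_one h),
      by simp, by simp⟩
  have h_mul {x y : RatFunc ℚ} (hx : VanishesToOrder n 0 x) (hy : VanishesToOrder n 0 y) :
      VanishesToOrder n 0 (x * y) := (hx.mul hn hy).mono (Nat.zero_le _)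
  have ht0 := ht.mono (Nat.zero_le 2)
  have ht2 := (ht.pow hn 2).mono (Nat.zero_le _)
  have hf := (h1.add hn (h_mul ht0 hs).neg).add hn (h_mul ht2 hh).neg
  have hJE := (hJ.mul hn hE).mul hn hf
  have hts := h_mul (h_mul ht0 hs) hh
  have hQs := h_mul hQ hs
  have hb := ((((h_mul hs hs).add hn (hts.add hn hts)).add hn (h_mul ht2 (h_mul hh hh))).add hn
    (hh.add hn hh).neg).add hn (hQs.add hn hQs).neg
  rw [e]
  have hJt := ((hJ.pow hn 2).mul hn (ht.pow hn 2)).mul hn hb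
  exact (((hE.mul hn hE).mono (by norm_num)).add hn
    ((hJE.add hn hJE).mono (by norm_num))).add hn (hJt.mono (by norm_num))

end

/-- Theorem 1.1: for `n ≡ 1 (mod 3)`,
`∑_{i+j≤n-1} A_q(i)A_q(j) ≡ [n]² (q²;q³)_{(n-1)/3}⁶/(q³;q³)_{(n-1)/3}⁶ ·
{1 + 2[n]²(2-qⁿ) ∑_{r=1}^{(n-1)/3} (q^{3r-1}/[3r-1]² - q^{3r}/[3r]²)} (mod Φ_n(q)⁶)`,
i.e. the difference can be written as `N/D` with `Φ_n(q) ∤ D` and `Φ_n(q)⁶ ∣ N`. -/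
theorem stmt_8 (n : ℕ) (hn : 0 < n) (h3 : n % 3 = 1) :
    ∃ N D : Polynomial ℚ, ¬ (Polynomial.cyclotomic n ℚ ∣ D) ∧
      (Polynomial.cyclotomic n ℚ) ^ 6 ∣ N ∧
      ((∑ i ∈ range n, ∑ j ∈ range (n - i), Aq i * Aq j)
        - qint n ^ 2 * poch (qq ^ 2) ((n - 1) / 3) ^ 6 / poch (qq ^ 3) ((n - 1) / 3) ^ 6
          * (1 + 2 * qint n ^ 2 * (2 - qq ^ n)
            * ∑ r ∈ Icc 1 ((n - 1) / 3),
                (qq ^ (3 * r - 1) / qint (3 * r - 1) ^ 2 - qq ^ (3 * r) / qint (3 * r) ^ 2)))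
        * algebraMap (Polynomial ℚ) (RatFunc ℚ) D
      = algebraMap (Polynomial ℚ) (RatFunc ℚ) N := by
  change VanishesToOrder n 6 _
  obtain ⟨m, rfl⟩ : ∃ m, n = 3 * m + 1 := ⟨n / 3, by omega⟩
  rw [show (3 * m + 1 - 1) / 3 = m by omega]
  have hq1 : (1 : RatFunc ℚ) - qq ≠ 0 :=
    sub_ne_zero.2 (by simpa using (qq_pow_ne_one one_ne_zero).symm)
  rcases Nat.eq_zero_or_pos m with rfl | hm
  · simpa [Aq, poch, qint, div_self hq1] using VanishesToOrder.zero (e := 6) hn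
  have hζ := Complex.isPrimitiveRoot_exp (3 * m + 1) (by omega)
  have h1 := hζ.ne_one (by omega)
  generalize Complex.exp _ = ζ at hζ h1
  obtain ⟨h, E, hh, hE, hT⟩ := exists_sum_Aq_eq hζ h1
  have hQ := ReducesTo.qq (ζ := ζ).pow (3 * m + 1)
  have hu := ((ReducesTo.qq (ζ := ζ).pow 2).poch m).div ((ReducesTo.qq.pow 3).poch m)
    (qPoch_cube_ne_zero hζ (by omega))
  have hi := reducesTo_qint h1 (3 * m + 1)
  rw [hζ.pow_eq_one, sub_self, zero_div] at hi
  have hJ := hi.mul (hu.pow 3)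
  rw [zero_mul] at hJ
  have hs := ReducesTo.sum (s := range m) fun i hi =>
    ((reducesTo_pow_mul_cube_pow ζ 3 i).koebe
      (cube_mul_cube_pow_ne_one hζ (by have := mem_range.1 hi; omega))).sub
    ((reducesTo_pow_mul_cube_pow ζ 2 i).koebe
      (pow_mul_cube_pow_ne_one hζ two_pos (by have := mem_range.1 hi; omega)))
  have key := (vanishes_sum_sub_sq hζ h1).add hn
    (vanishes_sq_sub hn (.of_reducesTo_zero hζ hn hJ) (vanishes_delta hζ)
      (.of_reducesTo hζ hn hQ) (pow_ne_zero _ qq_ne_zero) (.of_reducesTo hζ hn hs) hh hE rfl)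
  rw [← hT, sub_add_sub_cancel, ← koebe_sum_eq_qint_sum] at key
  convert key using 2
  ring
end

section
/- Let p be a prime with p ≡ 1 (mod 6). Then ∑_{i+j ≤ p-1, i,j ≥ 0} (6i+1)(6j+1)·((1/3)_i⁶(1/3)_j⁶)/((1)_i⁶(1)_j⁶) ≡ ((2/3)_{(p-1)/3}⁶/(1)_{(p-1)/3}⁶)·{p² + 2p⁴·∑_{r=1}^{(p-1)/3}(1/(3r-1)² - 1/(3r)²)} (mod p⁶), as a congruence of rational numbers with denominators coprime to p. -/
/-- The rising factorial (Pochhammer symbol) `(x)_k = x(x+1)⋯(x+k-1)` over `ℚ`. -/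
def rf (x : ℚ) (k : ℕ) : ℚ := ∏ i ∈ Finset.range k, (x + i)

/-- The rising factorial `x (x + 1) ⋯ (x + k - 1)` in a commutative ring. -/
def rising {R : Type*} [CommRing R] (x : R) (k : ℕ) : R := ∏ i ∈ Finset.range k, (x + i)

section Dougall

variable {K : Type*} [Field K]

lemma rising_succ {R : Type*} [CommRing R] (x : R) (k : ℕ) :
    rising x (k + 1) = rising x k * (x + k) := Finset.prod_range_succ _ _

lemma rising_zero {R : Type*} [CommRing R] (x : R) : rising x 0 = 1 := Finset.prod_range_zero _

lemma rising_add_one_mul {R : Type*} [CommRing R] (x : R) (k : ℕ) :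
    x * rising (x + 1) k = rising x k * (x + k) := by
  rw [← rising_succ, rising, rising, Finset.prod_range_succ', mul_comm]
  congr 1
  · exact Finset.prod_congr rfl fun i _ => by push_cast; ring
  · simp

lemma rising_ne_zero {x : K} (h : ∀ i : ℕ, x + i ≠ 0) (k : ℕ) : rising x k ≠ 0 :=
  Finset.prod_ne_zero_iff.mpr fun i _ => h i

lemma dougall_certificate (a b c d x k : K) :
    (-((x - b) * (x - c) * (x - d)) * (x + a - b - c - d + k) * (k - (x - b - c - d)) * (x - a)
        - (x + a - b - c - d) * ((x - b - c) * (x - b - d) * (x - c - d)) * (x - a - k) * (x + k))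
        * (a + 2 * k)
      = (2 * x - b - c - d) *
        (-((a + k) * (b + k) * (c + k) * (d + k) * (x + a - b - c - d + k) * (x - a - k))
          - k * (k + a - b) * (k + a - c) * (k + a - d) * (k - (x - b - c - d)) * (x + k)) := by
  ring

/-- The summand of Dougall's `₇F₆` series (times `a`), with `(-n)_k / k!` written as
`(-1) ^ k * n.choose k`. -/
def dougallTerm (a b c d : K) (n k : ℕ) : K :=
  (a + 2 * k) * ((-1) ^ k * n.choose k * rising a k * rising b k * rising c k * rising d k
      * rising (1 + 2 * a - b - c - d + n) k)
    / (rising (1 + a - b) k * rising (1 + a - c) k * rising (1 + a - d) k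
      * rising (b + c + d - a - n) k * rising (1 + a + n) k)

/-- The auxiliary summand of the WZ-style telescoping for Dougall's sum. -/
def dougallAux (a b c d : K) (n k : ℕ) : K :=
  ((-1) ^ k * (n + 1).choose k * rising a k * rising b k * rising c k * rising d k
      * rising (1 + 2 * a - b - c - d + n) k)
    / (rising (1 + a - b) k * rising (1 + a - c) k * rising (1 + a - d) k
      * rising (b + c + d - a - n) k * rising (1 + a + n) k)

lemma dougall_combine {T1 T0 g E Q X R1 R0 D m N x : K} (u1 : T1 * (E * (-Q) * X) = R1 * g)
    (u0 : T0 * m = R0 * g) :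
    (T1 * (D * Q) - T0 * (x * N)) * (E * m) * X = (-D * m * R1 - x * N * E * X * R0) * g := by
  linear_combination (-D * m) * u1 - x * N * E * X * u0

variable [CharZero K] {a b c d : K}

lemma dougallTerm_eq_aux (n k : ℕ) :
    dougallTerm a b c d n k * (n + 1)
      = (a + 2 * k) * (n + 1 - k) * dougallAux a b c d n k := by
  have h : (n.choose k : K) * (n + 1) = (n + 1).choose k * (n + 1 - k) := by
    rcases le_or_gt k (n + 1) with hk | hk
    · have := Nat.choose_mul_succ_eq n k
      rw [← Nat.cast_inj (R := K)] at this
      push_cast [Nat.cast_sub hk] at this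
      exact this
    · rw [Nat.choose_eq_zero_of_lt hk, Nat.choose_eq_zero_of_lt (by omega)]; simp
  unfold dougallTerm dougallAux
  linear_combination (a + 2 * k) * ((-1) ^ k * rising a k * rising b k * rising c k * rising d k
      * rising (1 + 2 * a - b - c - d + n) k)
    / (rising (1 + a - b) k * rising (1 + a - c) k * rising (1 + a - d) k
      * rising (b + c + d - a - n) k * rising (1 + a + n) k) * h

lemma dougallTerm_succ_eq_aux (hx : ∀ i : ℕ, 1 + a + i ≠ 0)
    (hs : ∀ m : ℤ, b + c + d - a + m ≠ 0) (n k : ℕ) :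
    dougallTerm a b c d (n + 1) k * ((1 + 2 * a - b - c - d + n) * (b + c + d - a - n - 1)
        * (1 + a + n + k))
      = (a + 2 * k) * (1 + 2 * a - b - c - d + n + k) * (b + c + d - a - n - 1 + k) * (1 + a + n)
        * dougallAux a b c d n k := by
  have hx' (j : ℕ) : rising (1 + a + (j : K)) k ≠ 0 := rising_ne_zero (fun i => by
    have := hx (j + i); push_cast at this; rwa [← add_assoc] at this) k
  have hs' (j : ℕ) : rising (b + c + d - a - (j : K)) k ≠ 0 := rising_ne_zero (fun i => by
    have := hs (i - j); push_cast at this; convert this using 1; ring) k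
  have e1 := rising_add_one_mul (1 + 2 * a - b - c - d + n) k
  have e2 := rising_add_one_mul (b + c + d - a - n - 1) k
  have e3 := rising_add_one_mul (1 + a + n) k
  rw [sub_add_cancel] at e2
  have h1 := hx' n
  have h2 := hx' (n + 1)
  have h3 := hs' n
  have h4 := hs' (n + 1)
  unfold dougallTerm dougallAux
  push_cast at h1 h2 h3 h4 ⊢
  rw [← add_assoc] at h2
  rw [← sub_sub] at h4
  rw [← add_assoc, ← sub_sub, ← add_assoc]
  generalize rising (1 + a + (n : K)) k = X at *
  generalize rising (1 + a + (n : K) + 1) k = X' at *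
  generalize rising (b + c + d - a - (n : K)) k = Y at *
  generalize rising (b + c + d - a - (n : K) - 1) k = Y' at *
  generalize rising (1 + 2 * a - b - c - d + (n : K)) k = Z at *
  generalize rising (1 + 2 * a - b - c - d + (n : K) + 1) k = Z' at *
  generalize rising (1 + a - b) k = A
  generalize rising (1 + a - c) k = B
  generalize rising (1 + a - d) k = C
  have key : Z' / (Y' * X') * ((1 + 2 * a - b - c - d + n) * (b + c + d - a - n - 1)
        * (1 + a + n + k)) = (1 + 2 * a - b - c - d + n + k) * (b + c + d - a - n - 1 + k)
          * (1 + a + n) * (Z / (Y * X)) := by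
    rw [div_mul_eq_mul_div, mul_div_assoc', div_eq_div_iff (by positivity) (by positivity)]
    calc _ = ((1 + 2 * a - b - c - d + n) * Z') * ((b + c + d - a - n - 1) * Y)
            * (X * (1 + a + n + k)) := by ring
      _ = _ := by rw [e1, e2, ← e3]; ring
  simp only [div_eq_mul_inv, mul_inv] at key ⊢
  linear_combination (a + 2 * k) * ((-1) ^ k * ((n + 1).choose k : K) * rising a k * rising b k
    * rising c k * rising d k) * A⁻¹ * B⁻¹ * C⁻¹ * key

lemma dougallAux_succ (hx : ∀ i : ℕ, 1 + a + i ≠ 0) (hb : ∀ i : ℕ, 1 + a - b + i ≠ 0)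
    (hc : ∀ i : ℕ, 1 + a - c + i ≠ 0) (hd : ∀ i : ℕ, 1 + a - d + i ≠ 0)
    (hs : ∀ m : ℤ, b + c + d - a + m ≠ 0) (n k : ℕ) :
    dougallAux a b c d n (k + 1) * ((k + 1) * (1 + a - b + k) * (1 + a - c + k) * (1 + a - d + k)
        * (b + c + d - a - n + k) * (1 + a + n + k))
      = -((n + 1 - k) * (a + k) * (b + k) * (c + k) * (d + k) * (1 + 2 * a - b - c - d + n + k))
        * dougallAux a b c d n k := by
  have h : ((n + 1).choose (k + 1) : K) * (k + 1) = (n + 1).choose k * (n + 1 - k) := by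
    rcases le_or_gt k (n + 1) with hk | hk
    · have := Nat.choose_succ_right_eq (n + 1) k
      rw [← Nat.cast_inj (R := K)] at this
      push_cast [Nat.cast_sub hk] at this
      exact this
    · rw [Nat.choose_eq_zero_of_lt hk, Nat.choose_eq_zero_of_lt (by omega)]; simp
  have h1 : (1 + a + n + k : K) ≠ 0 := by
    have := hx (n + k); push_cast at this; rwa [← add_assoc] at this
  have h2 : (b + c + d - a - n + k : K) ≠ 0 := by
    have := hs (k - n); push_cast at this; convert this using 1; ring
  have h3 := hb k
  have h4 := hc k
  have h5 := hd k
  unfold dougallAux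
  simp only [rising_succ, pow_succ]
  generalize (((n + 1).choose (k + 1) : ℕ) : K) = u at *
  generalize (((n + 1).choose k : ℕ) : K) = v at *
  simp only [div_eq_mul_inv, mul_inv]
  generalize 1 + a - b + (k : K) = A at *
  generalize 1 + a - c + (k : K) = B at *
  generalize 1 + a - d + (k : K) = C at *
  generalize b + c + d - a - n + (k : K) = D at *
  generalize 1 + a + n + (k : K) = E at *
  have key : A * A⁻¹ * (B * B⁻¹) * (C * C⁻¹) * (D * D⁻¹) * (E * E⁻¹) = 1 := by
    simp [h1, h2, h3, h4, h5]
  generalize (rising (1 + a - b) k)⁻¹ = r1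
  generalize (rising (1 + a - c) k)⁻¹ = r2
  generalize (rising (1 + a - d) k)⁻¹ = r3
  generalize (rising (b + c + d - a - n) k)⁻¹ = r4
  generalize (rising (1 + a + n) k)⁻¹ = r5
  generalize rising (1 + 2 * a - b - c - d + n) k = r6
  generalize 1 + 2 * a - b - c - d + n + (k : K) = e
  generalize (-1 : K) ^ k = s
  have : ∀ W : K, W * (A * A⁻¹ * (B * B⁻¹) * (C * C⁻¹) * (D * D⁻¹) * (E * E⁻¹)) = W := by
    intro W; rw [key, mul_one]
  calc _ = -s * (u * (k + 1)) * rising a k * (a + k) * rising b k * (b + k) * rising c k * (c + k)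
        * rising d k * (d + k) * r6 * e * r1 * r2 * r3 * r4 * r5
        * (A * A⁻¹ * (B * B⁻¹) * (C * C⁻¹) * (D * D⁻¹) * (E * E⁻¹)) := by ring
    _ = _ := by rw [this, h]; ring

/-- The antidifference in the telescoping for Dougall's sum. -/
def dougallCert (a b c d : K) (n k : ℕ) : K :=
  (1 + a + n) * (2 * (1 + a + n) - b - c - d) * k * (k + a - b)
    * (k + a - c) * (k + a - d) * (b + c + d - a - n - 1 + k) * dougallAux a b c d n k

lemma dougallCert_succ (hx : ∀ i : ℕ, 1 + a + i ≠ 0) (hb : ∀ i : ℕ, 1 + a - b + i ≠ 0)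
    (hc : ∀ i : ℕ, 1 + a - c + i ≠ 0) (hd : ∀ i : ℕ, 1 + a - d + i ≠ 0)
    (hs : ∀ m : ℤ, b + c + d - a + m ≠ 0) (n k : ℕ) :
    dougallCert a b c d n (k + 1) * (1 + a + n + k)
      = -((1 + a + n) * (2 * (1 + a + n) - b - c - d) * ((n + 1 - k) * (a + k) * (b + k) * (c + k)
        * (d + k) * (1 + 2 * a - b - c - d + n + k)) * dougallAux a b c d n k) := by
  have t2 := dougallAux_succ hx hb hc hd hs n k
  rw [dougallCert]
  push_cast
  rw [show (k : K) + 1 + a - b = 1 + a - b + k by ring,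
    show (k : K) + 1 + a - c = 1 + a - c + k by ring,
    show (k : K) + 1 + a - d = 1 + a - d + k by ring,
    show b + c + d - a - n - 1 + ((k : K) + 1) = b + c + d - a - n + k by ring]
  generalize 1 + a - b + (k : K) = A at *
  generalize 1 + a - c + (k : K) = B at *
  generalize 1 + a - d + (k : K) = C at *
  generalize b + c + d - a - n + (k : K) = D at *
  generalize 1 + a + n + (k : K) = E at *
  generalize 1 + 2 * a - b - c - d + n + (k : K) = e at *
  generalize 2 * (1 + a + (n : K)) - b - c - d = y at *
  linear_combination (1 + a + n) * y * t2

lemma dougall_telescope (hx : ∀ i : ℕ, 1 + a + i ≠ 0) (hb : ∀ i : ℕ, 1 + a - b + i ≠ 0)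
    (hc : ∀ i : ℕ, 1 + a - c + i ≠ 0) (hd : ∀ i : ℕ, 1 + a - d + i ≠ 0)
    (hs : ∀ m : ℤ, b + c + d - a + m ≠ 0) (n k : ℕ) {x : K} (hxn : 1 + a + (n : K) = x) :
    (dougallTerm a b c d (n + 1) k * ((x - b) * (x - c) * (x - d) * (x - b - c - d))
      - dougallTerm a b c d n k * (x * ((x - b - c) * (x - b - d) * (x - c - d))))
        * ((x + a - b - c - d) * (x - a))
      = dougallCert a b c d n (k + 1) - dougallCert a b c d n k := by
  have h1 : (x + k : K) ≠ 0 := by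
    have := hx (n + k); push_cast at this; rwa [← add_assoc, hxn] at this
  have t0 := dougallTerm_eq_aux (a := a) (b := b) (c := c) (d := d) n k
  have t1 := dougallTerm_succ_eq_aux hx hs n k
  have t2 := dougallCert_succ hx hb hc hd hs n k
  have he : 1 + 2 * a - b - c - d + (n : K) = x + a - b - c - d := by rw [← hxn]; ring
  have hq : b + c + d - a - (n : K) - 1 = -(x - b - c - d) := by rw [← hxn]; ring
  have hn : (n : K) + 1 = x - a := by rw [← hxn]; ring
  rw [hn] at t0
  rw [he, hq, hxn] at t1
  rw [he, hn, hxn] at t2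
  refine mul_right_cancel₀ h1 ?_
  rw [sub_mul (dougallCert _ _ _ _ _ _), t2, dougall_combine t1 t0, dougallCert, hq, hxn]
  linear_combination x * dougallAux a b c d n k * dougall_certificate a b c d x (k : K)

lemma dougall_step (hx : ∀ i : ℕ, 1 + a + i ≠ 0) (hb : ∀ i : ℕ, 1 + a - b + i ≠ 0)
    (hc : ∀ i : ℕ, 1 + a - c + i ≠ 0) (hd : ∀ i : ℕ, 1 + a - d + i ≠ 0)
    (hs : ∀ m : ℤ, b + c + d - a + m ≠ 0) (n : ℕ) (he : 1 + 2 * a - b - c - d + n ≠ 0) {x : K}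
    (hxn : 1 + a + (n : K) = x) :
    (∑ k ∈ Finset.range (n + 2), dougallTerm a b c d (n + 1) k)
        * ((x - b) * (x - c) * (x - d) * (x - b - c - d))
      = (∑ k ∈ Finset.range (n + 1), dougallTerm a b c d n k)
        * (x * ((x - b - c) * (x - b - d) * (x - c - d))) := by
  have hlast : dougallTerm a b c d n (n + 1) = 0 := by simp [dougallTerm]
  have he' : 1 + 2 * a - b - c - d + (n : K) = x + a - b - c - d := by rw [← hxn]; ring
  have hn : (n : K) + 1 = x - a := by rw [← hxn]; ring
  have hne : (x + a - b - c - d) * (x - a) ≠ 0 := by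
    rw [← he', ← hn]
    exact mul_ne_zero he (by exact_mod_cast n.succ_ne_zero)
  rw [← add_zero (∑ k ∈ Finset.range (n + 1), dougallTerm a b c d n k), ← hlast,
    ← Finset.sum_range_succ (fun k => dougallTerm a b c d n k) (n + 1),
    ← sub_eq_zero, Finset.sum_mul, Finset.sum_mul, ← Finset.sum_sub_distrib]
  refine (mul_eq_zero.mp ?_).resolve_right hne
  rw [Finset.sum_mul, Finset.sum_congr rfl fun k _ => dougall_telescope hx hb hc hd hs n k hxn,
    Finset.sum_range_sub]
  simp [dougallCert, dougallAux]

/-- **Dougall's `₇F₆` summation**, with the denominators of the right-hand side cleared. -/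
theorem dougall_sum (hx : ∀ i : ℕ, 1 + a + i ≠ 0) (hb : ∀ i : ℕ, 1 + a - b + i ≠ 0)
    (hc : ∀ i : ℕ, 1 + a - c + i ≠ 0) (hd : ∀ i : ℕ, 1 + a - d + i ≠ 0)
    (hs : ∀ m : ℤ, b + c + d - a + m ≠ 0) (n : ℕ)
    (he : ∀ i < n, 1 + 2 * a - b - c - d + (i : K) ≠ 0) :
    (∑ k ∈ Finset.range (n + 1), dougallTerm a b c d n k)
        * (rising (1 + a - b) n * rising (1 + a - c) n * rising (1 + a - d) n
          * rising (1 + a - b - c - d) n)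
      = a * (rising (1 + a) n * rising (1 + a - b - c) n * rising (1 + a - b - d) n
          * rising (1 + a - c - d) n) := by
  induction n with
  | zero => simp [dougallTerm, rising_zero]
  | succ n ih =>
    have ih := ih fun i hi => he i (by omega)
    have step := dougall_step hx hb hc hd hs n (he n (by omega)) rfl
    simp only [rising_succ]
    generalize (∑ k ∈ Finset.range (n + 2), dougallTerm a b c d (n + 1) k) = S1 at *
    generalize (∑ k ∈ Finset.range (n + 1), dougallTerm a b c d n k) = S0 at *
    rw [show 1 + a + (n : K) - b = 1 + a - b + n by ring,
      show 1 + a + (n : K) - c = 1 + a - c + n by ring,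
      show 1 + a + (n : K) - d = 1 + a - d + n by ring,
      show 1 + a - b + (n : K) - c - d = 1 + a - b - c - d + n by ring,
      show 1 + a - b + (n : K) - c = 1 + a - b - c + n by ring,
      show 1 + a - b + (n : K) - d = 1 + a - b - d + n by ring,
      show 1 + a - c + (n : K) - d = 1 + a - c - d + n by ring] at step
    generalize 1 + a - b + (n : K) = u1 at *
    generalize 1 + a - c + (n : K) = u2 at *
    generalize 1 + a - d + (n : K) = u3 at *
    generalize 1 + a - b - c - d + (n : K) = u4 at *
    generalize 1 + a - b - c + (n : K) = u5 at *
    generalize 1 + a - b - d + (n : K) = u6 at *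
    generalize 1 + a - c - d + (n : K) = u7 at *
    generalize 1 + a + (n : K) = u8 at *
    linear_combination (rising (1 + a - b) n * rising (1 + a - c) n * rising (1 + a - d) n
          * rising (1 + a - b - c - d) n) * step
      + (u8 * (u5 * u6 * u7)) * ih

end Dougall

section Congruence

variable {K : Type*} [NormedField K] {ρ : ℝ} {x y z x' y' : K}

/-- `x` and `y` are integral and congruent up to an error of norm at most `ρ`. -/
def IntCongr (ρ : ℝ) (x y : K) : Prop := ‖x‖ ≤ 1 ∧ ‖y‖ ≤ 1 ∧ ‖x - y‖ ≤ ρ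

lemma norm_mul_le_of_le_one (hx : ‖x‖ ≤ 1) (hy : ‖y‖ ≤ ρ) : ‖x * y‖ ≤ ρ := by
  rw [norm_mul]
  exact (mul_le_of_le_one_left (norm_nonneg y) hx).trans hy

lemma norm_pow_le_one_of_le (hx : ‖x‖ ≤ 1) (n : ℕ) : ‖x ^ n‖ ≤ 1 := by
  rw [norm_pow]
  exact pow_le_one₀ (norm_nonneg _) hx

lemma norm_prod_le_one_of_le {ι : Type*} {s : Finset ι} {f : ι → K} (h : ∀ i ∈ s, ‖f i‖ ≤ 1) :
    ‖∏ i ∈ s, f i‖ ≤ 1 := by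
  rw [norm_prod]
  exact Finset.prod_le_one (fun _ _ => norm_nonneg _) h

lemma norm_prod_eq_one_of_eq {ι : Type*} {s : Finset ι} {f : ι → K} (h : ∀ i ∈ s, ‖f i‖ = 1) :
    ‖∏ i ∈ s, f i‖ = 1 := by
  rw [norm_prod]
  exact Finset.prod_eq_one h

namespace IntCongr

lemma refl (hρ : 0 ≤ ρ) (hx : ‖x‖ ≤ 1) : IntCongr ρ x x := ⟨hx, hx, by simpa using hρ⟩

lemma symm (h : IntCongr ρ x y) : IntCongr ρ y x := ⟨h.2.1, h.1, by
  rw [norm_sub_rev]; exact h.2.2⟩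

end IntCongr

variable [IsUltrametricDist K]

lemma norm_add_le_of_le_of_le (hx : ‖x‖ ≤ ρ) (hy : ‖y‖ ≤ ρ) : ‖x + y‖ ≤ ρ :=
  (IsUltrametricDist.norm_add_le_max x y).trans (max_le hx hy)

lemma norm_add_eq_one (hx : ‖x‖ = 1) (hy : ‖y‖ < 1) : ‖x + y‖ = 1 := by
  rw [IsUltrametricDist.norm_add_eq_max_of_norm_ne_norm (by rw [hx]; exact hy.ne'), hx,
    max_eq_left hy.le]

namespace IntCongr

lemma trans (h : IntCongr ρ x y) (h' : IntCongr ρ y z) : IntCongr ρ x z :=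
  ⟨h.1, h'.2.1, by
    rw [← sub_add_sub_cancel x y z]
    exact norm_add_le_of_le_of_le h.2.2 h'.2.2⟩

lemma of_norm_le (hρ : ρ ≤ 1) (hx : ‖x‖ ≤ 1) (h : ‖y - x‖ ≤ ρ) : IntCongr ρ x y := by
  refine ⟨hx, ?_, by rwa [norm_sub_rev]⟩
  rw [← sub_add_cancel y x]
  exact norm_add_le_of_le_of_le (h.trans hρ) hx

lemma add (h : IntCongr ρ x y) (h' : IntCongr ρ x' y') : IntCongr ρ (x + x') (y + y') :=
  ⟨norm_add_le_of_le_of_le h.1 h'.1, norm_add_le_of_le_of_le h.2.1 h'.2.1, by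
    rw [add_sub_add_comm]
    exact norm_add_le_of_le_of_le h.2.2 h'.2.2⟩

lemma mul (h : IntCongr ρ x y) (h' : IntCongr ρ x' y') : IntCongr ρ (x * x') (y * y') :=
  ⟨norm_mul_le_of_le_one h.1 h'.1, norm_mul_le_of_le_one h.2.1 h'.2.1, by
    rw [show x * x' - y * y' = x * (x' - y') + y' * (x - y) by ring]
    exact norm_add_le_of_le_of_le (norm_mul_le_of_le_one h.1 h'.2.2)
      (norm_mul_le_of_le_one h'.2.1 h.2.2)⟩

lemma pow (hρ : 0 ≤ ρ) (h : IntCongr ρ x y) (n : ℕ) : IntCongr ρ (x ^ n) (y ^ n) := by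
  induction n with
  | zero => simpa using refl hρ (by simp)
  | succ n ih => simpa only [pow_succ] using ih.mul h

lemma prod (hρ : 0 ≤ ρ) {ι : Type*} {s : Finset ι} {f g : ι → K}
    (h : ∀ i ∈ s, IntCongr ρ (f i) (g i)) : IntCongr ρ (∏ i ∈ s, f i) (∏ i ∈ s, g i) := by
  classical
  induction s using Finset.induction_on with
  | empty => simpa using refl hρ (by simp)
  | insert a s ha ih =>
    rw [Finset.prod_insert ha, Finset.prod_insert ha]
    exact (h a (by simp)).mul (ih fun i hi => h i (by simp [hi]))

lemma sum (hρ : 0 ≤ ρ) {ι : Type*} {s : Finset ι} {f g : ι → K}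
    (h : ∀ i ∈ s, IntCongr ρ (f i) (g i)) : IntCongr ρ (∑ i ∈ s, f i) (∑ i ∈ s, g i) := by
  classical
  induction s using Finset.induction_on with
  | empty => simpa using refl hρ (by simp)
  | insert a s ha ih =>
    rw [Finset.sum_insert ha, Finset.sum_insert ha]
    exact (h a (by simp)).add (ih fun i hi => h i (by simp [hi]))

lemma inv (hρ : ρ < 1) (h : IntCongr ρ x y) (hx : ‖x‖ = 1) : IntCongr ρ x⁻¹ y⁻¹ := by
  have hy : ‖y‖ = 1 := by
    rw [← add_sub_cancel x y]
    exact norm_add_eq_one hx (h.symm.2.2.trans_lt hρ)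
  have hx0 : x ≠ 0 := by rintro rfl; simp at hx
  have hy0 : y ≠ 0 := by rintro rfl; simp at hy
  refine ⟨by simp [hx], by simp [hy], ?_⟩
  rw [inv_sub_inv hx0 hy0, norm_div, norm_mul, hx, hy, norm_sub_rev]
  simpa using h.2.2

lemma div (hρ : ρ < 1) (h : IntCongr ρ x y) (h' : IntCongr ρ x' y') (hx : ‖x'‖ = 1) :
    IntCongr ρ (x / x') (y / y') := by
  rw [div_eq_mul_inv, div_eq_mul_inv]
  exact h.mul (h'.inv hρ hx)

/-- First-order expansion of a product. -/
lemma prod_one_add (hρ : 0 ≤ ρ) (hρ1 : ρ ≤ 1) {ι : Type*} {s : Finset ι} {f : ι → K}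
    (h : ∀ i ∈ s, ‖f i‖ ≤ ρ) :
    IntCongr (ρ ^ 2) (∏ i ∈ s, (1 + f i)) (1 + ∑ i ∈ s, f i) := by
  classical
  induction s using Finset.induction_on with
  | empty => simpa using refl (pow_nonneg hρ 2) (by simp)
  | insert a s ha ih =>
    rw [Finset.prod_insert ha, Finset.sum_insert ha]
    have ha' := h a (by simp)
    have hs := ih fun i hi => h i (by simp [hi])
    have hsum : ‖∑ i ∈ s, f i‖ ≤ ρ :=
      IsUltrametricDist.norm_sum_le_of_forall_le_of_nonneg hρ fun i hi => h i (by simp [hi])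
    have h1 : ‖1 + f a‖ ≤ 1 := norm_add_le_of_le_of_le (by simp) (ha'.trans hρ1)
    refine ((refl (by positivity) h1).mul hs).trans
      (of_norm_le (pow_le_one₀ hρ hρ1) (norm_mul_le_of_le_one h1 hs.2.1) ?_)
    rw [show 1 + (f a + ∑ i ∈ s, f i) - (1 + f a) * (1 + ∑ i ∈ s, f i)
      = -(f a * ∑ i ∈ s, f i) by ring, norm_neg, norm_mul, sq]
    exact mul_le_mul ha' hsum (norm_nonneg _) hρ

end IntCongr

/-- If the terms past `N` are negligible and `2 N < p`, the triangular double sum is congruent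
to a square. -/
lemma norm_triangle_sum_sub_sq_le {p N : ℕ} (hN : 2 * N < p) (hρ : 0 ≤ ρ) {t : ℕ → K}
    (ht : ∀ k < p, ‖t k‖ ≤ 1) (ht' : ∀ k < p, N < k → ‖t k‖ ≤ ρ) :
    ‖∑ i ∈ Finset.range p, ∑ j ∈ Finset.range (p - i), t i * t j
      - (∑ k ∈ Finset.range (N + 1), t k) ^ 2‖ ≤ ρ := by
  have h1 : ∑ k ∈ Finset.range (N + 1), t k
      = ∑ k ∈ Finset.range p, if k ≤ N then t k else 0 := by
    rw [← Finset.sum_filter]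
    refine Finset.sum_congr ?_ fun _ _ => rfl
    ext k; simp only [Finset.mem_range, Finset.mem_filter]; omega
  have h2 (i : ℕ) : ∑ j ∈ Finset.range (p - i), t i * t j
      = ∑ j ∈ Finset.range p, if i + j < p then t i * t j else 0 := by
    rw [← Finset.sum_filter]
    refine Finset.sum_congr ?_ fun _ _ => rfl
    ext k; simp only [Finset.mem_range, Finset.mem_filter]; omega
  rw [h1, sq, Finset.sum_mul_sum, ← Finset.sum_sub_distrib]
  refine IsUltrametricDist.norm_sum_le_of_forall_le_of_nonneg hρ fun i hi => ?_
  rw [h2, ← Finset.sum_sub_distrib]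
  refine IsUltrametricDist.norm_sum_le_of_forall_le_of_nonneg hρ fun j hj => ?_
  rw [Finset.mem_range] at hi hj
  by_cases hi' : i ≤ N
  · by_cases hj' : j ≤ N
    · simpa [hi', hj', show i + j < p by omega] using hρ
    · split_ifs
      · simpa only [if_pos hi', if_neg hj', mul_zero, sub_zero] using
          norm_mul_le_of_le_one (ht i hi) (ht' j hj (by omega))
      · simpa using hρ
  · rw [if_neg hi', zero_mul, sub_zero]
    split_ifs
    · rw [mul_comm]
      exact norm_mul_le_of_le_one (ht j hj) (ht' i hi (by omega))
    · simpa using hρ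

end Congruence

section FifthRoots

variable {K : Type*} [Field K] {ζ P x : K}

lemma prod_sub_fifth_roots (hζ : 1 + ζ + ζ ^ 2 + ζ ^ 3 + ζ ^ 4 = 0) (x P : K) :
    (x - P) * (x - ζ * P) * (x - ζ ^ 2 * P) * (x - ζ ^ 3 * P) * (x - ζ ^ 4 * P)
      = x ^ 5 - P ^ 5 := by
  grind

lemma rising_mul_fifth_roots (hζ : 1 + ζ + ζ ^ 2 + ζ ^ 3 + ζ ^ 4 = 0) (x P : K) (k : ℕ) :
    rising (x - P) k * rising (x - ζ * P) k * rising (x - ζ ^ 2 * P) k * rising (x - ζ ^ 3 * P) k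
      * rising (x - ζ ^ 4 * P) k = ∏ i ∈ Finset.range k, ((x + i) ^ 5 - P ^ 5) := by
  simp only [rising, ← Finset.prod_mul_distrib, ← prod_sub_fifth_roots hζ]
  exact Finset.prod_congr rfl fun i _ => by ring

lemma rising_mul_fifth_roots' (hζ : 1 + ζ + ζ ^ 2 + ζ ^ 3 + ζ ^ 4 = 0) (x P : K) (k : ℕ) :
    rising (x + P) k * rising (x + ζ * P) k * rising (x + ζ ^ 2 * P) k * rising (x + ζ ^ 3 * P) k
      * rising (x + ζ ^ 4 * P) k = ∏ i ∈ Finset.range k, ((x + i) ^ 5 + P ^ 5) := by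
  have h := rising_mul_fifth_roots hζ x (-P) k
  simpa only [mul_neg, sub_neg_eq_add, Odd.neg_pow (by decide : Odd 5)] using h

lemma rising_neg_natCast (n k : ℕ) :
    (-1) ^ k * (n.choose k : K) * rising 1 k = rising (-n : K) k := by
  induction k with
  | zero => simp [rising_zero]
  | succ k ih =>
    have h : (n.choose (k + 1) : K) * (k + 1) = n.choose k * (n - k) := by
      rcases le_or_gt k n with hk | hk
      · have := congrArg (Nat.cast (R := K)) (Nat.choose_succ_right_eq n k)
        push_cast [Nat.cast_sub hk] at this
        exact this
      · rw [Nat.choose_eq_zero_of_lt hk, Nat.choose_eq_zero_of_lt (by omega)]; simp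
    rw [rising_succ, rising_succ, ← ih]
    linear_combination (-1) ^ (k + 1) * rising 1 k * h

lemma rising_reflect (x : K) (n : ℕ) : rising x n = (-1) ^ n * rising (1 - x - n) n := by
  have h : (-1 : K) ^ n = ∏ _i ∈ Finset.range n, (-1 : K) := by simp
  rw [rising, ← Finset.prod_range_reflect, rising, h, ← Finset.prod_mul_distrib]
  refine Finset.prod_congr rfl fun i hi => ?_
  rw [Finset.mem_range] at hi
  rw [Nat.sub_sub, Nat.cast_sub (by omega)]
  push_cast
  ring

lemma rising_sq (x : K) (n : ℕ) :
    rising x n ^ 2 = (-1) ^ n * ∏ i ∈ Finset.range n, (x + i) * (1 - x - n + i) := by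
  rw [sq, Finset.prod_mul_distrib]
  nth_rw 2 [rising_reflect]
  simp only [rising]
  ring

variable [CharZero K] {N : ℕ}

lemma rising_one_ne_zero (k : ℕ) : rising (1 : K) k ≠ 0 :=
  rising_ne_zero (fun i => by exact_mod_cast (by omega : 1 + i ≠ 0)) k

lemma add_fifth_root_mul_ne_zero {η : K} (hη : η ^ 5 = 1) {p z : ℤ} (h : z ≠ -p) :
    (z : K) + η * p ≠ 0 := by
  intro h0
  have h1 : (z : K) ^ 5 = (-p) ^ 5 := by
    linear_combination ((z : K) ^ 4 - z ^ 3 * (η * p) + z ^ 2 * (η * p) ^ 2 - z * (η * p) ^ 3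
      + (η * p) ^ 4) * h0 - p ^ 5 * hη
  exact h ((by decide : Odd 5).pow_injective (by exact_mod_cast h1))

/-- The summand at the fifth-root-of-unity specialisation of Dougall's sum. -/
lemma three_mul_dougallTerm_eq (hζ : 1 + ζ + ζ ^ 2 + ζ ^ 3 + ζ ^ 4 = 0) (hN : (N : K) = P - 1 / 3)
    (k : ℕ) :
    3 * dougallTerm (1 / 3) (1 / 3 - ζ * P) (1 / 3 - ζ ^ 2 * P) (1 / 3 - ζ ^ 3 * P) N k
      = (6 * k + 1) * (rising (1 / 3) k * ∏ i ∈ Finset.range k, ((1 / 3 + (i : K)) ^ 5 - P ^ 5))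
        / (rising 1 k * ∏ i ∈ Finset.range k, ((1 + (i : K)) ^ 5 + P ^ 5)) := by
  rw [← rising_mul_fifth_roots hζ, ← rising_mul_fifth_roots' hζ, dougallTerm]
  rw [show 1 + 2 * (1 / 3) - (1 / 3 - ζ * P) - (1 / 3 - ζ ^ 2 * P) - (1 / 3 - ζ ^ 3 * P) + (N : K)
      = 1 / 3 - ζ ^ 4 * P by linear_combination hN + P * hζ,
    show 1 / 3 - ζ * P + (1 / 3 - ζ ^ 2 * P) + (1 / 3 - ζ ^ 3 * P) - 1 / 3 - (N : K)
      = 1 + ζ ^ 4 * P by linear_combination -hN - P * hζ,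
    show 1 + 1 / 3 + (N : K) = 1 + P by linear_combination hN,
    show 1 + 1 / 3 - (1 / 3 - ζ * P) = 1 + ζ * P by ring,
    show 1 + 1 / 3 - (1 / 3 - ζ ^ 2 * P) = 1 + ζ ^ 2 * P by ring,
    show 1 + 1 / 3 - (1 / 3 - ζ ^ 3 * P) = 1 + ζ ^ 3 * P by ring,
    show 1 / 3 - P = -(N : K) by rw [hN]; ring, ← rising_neg_natCast,
    mul_div_assoc', mul_comm (rising (1 : K) k), ← mul_div_mul_right _ _ (rising_one_ne_zero k)]
  congr 1 <;> ring

lemma sum_fifth_root_perturbation (hζ : 1 + ζ + ζ ^ 2 + ζ ^ 3 + ζ ^ 4 = 0) {p : ℕ}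
    (hp : p = 3 * N + 1) (hP : P = p / 3) :
    (∑ k ∈ Finset.range (N + 1),
        (6 * (k : K) + 1) * (rising (1 / 3) k * ∏ i ∈ Finset.range k, ((1 / 3 + (i : K)) ^ 5 - P ^ 5))
          / (rising 1 k * ∏ i ∈ Finset.range k, ((1 + (i : K)) ^ 5 + P ^ 5)))
        * ∏ i ∈ Finset.range N, ((1 + (i : K)) ^ 5 + P ^ 5)
      = p * (∏ i ∈ Finset.range N, ((1 + (i : K)) ^ 2 - P ^ 2))
        * (rising (2 / 3 + (ζ + ζ ^ 2) * P) N * rising (2 / 3 + (ζ + ζ ^ 3) * P) N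
          * rising (2 / 3 + (ζ ^ 2 + ζ ^ 3) * P) N) := by
  have hN : (N : K) = P - 1 / 3 := by rw [hP, hp]; push_cast; ring
  have h5 : ζ ^ 5 = 1 := by linear_combination (ζ - 1) * hζ
  have hroot {j : ℕ} (i : ℕ) : 1 + ζ ^ j * P + (i : K) ≠ 0 := by
    have := add_fifth_root_mul_ne_zero (η := ζ ^ j) (by rw [← pow_mul, mul_comm, pow_mul, h5, one_pow])
      (p := p) (z := 3 * (1 + i)) (by omega)
    intro h0
    refine this ?_
    push_cast
    linear_combination 3 * h0 - 3 * ζ ^ j * hP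
  have h45 : (ζ ^ 4) ^ 5 = 1 := by rw [← pow_mul, mul_comm, pow_mul, h5, one_pow]
  have key := dougall_sum (a := 1 / 3) (b := 1 / 3 - ζ * P) (c := 1 / 3 - ζ ^ 2 * P)
    (d := 1 / 3 - ζ ^ 3 * P) (n := N)
    (fun i => by
      have : ((4 + 3 * i : ℕ) : K) ≠ 0 := Nat.cast_ne_zero.mpr (by omega)
      intro h0
      apply this
      push_cast
      linear_combination 3 * h0)
    (fun i => by
      convert hroot (j := 1) i using 1
      ring)
    (fun i => by
      convert hroot (j := 2) i using 1
      ring)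
    (fun i => by
      convert hroot (j := 3) i using 1
      ring)
    (fun m h0 => by
      refine add_fifth_root_mul_ne_zero h45 (p := p) (z := 3 * (1 + N + m)) (by omega) ?_
      push_cast
      linear_combination 3 * h0 + 3 * P * hζ + 3 * hN - 3 * ζ ^ 4 * hP)
    (fun i hi h0 => by
      refine add_fifth_root_mul_ne_zero h45 (p := p) (z := 3 * (N - i) - 1) (by omega) ?_
      push_cast
      linear_combination -3 * h0 + 3 * P * hζ + 3 * hN - 3 * ζ ^ 4 * hP)
  have hsum := Finset.sum_congr rfl fun k (_ : k ∈ Finset.range (N + 1)) =>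
    three_mul_dougallTerm_eq hζ hN k
  rw [← hsum, ← Finset.mul_sum, ← rising_mul_fifth_roots' hζ]
  rw [show 1 + 1 / 3 - (1 / 3 - ζ * P) - (1 / 3 - ζ ^ 2 * P) - (1 / 3 - ζ ^ 3 * P)
      = 1 / 3 + (ζ + ζ ^ 2 + ζ ^ 3) * P by ring,
    show 1 + 1 / 3 - (1 / 3 - ζ * P) - (1 / 3 - ζ ^ 2 * P) = 2 / 3 + (ζ + ζ ^ 2) * P by ring,
    show 1 + 1 / 3 - (1 / 3 - ζ * P) - (1 / 3 - ζ ^ 3 * P) = 2 / 3 + (ζ + ζ ^ 3) * P by ring,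
    show 1 + 1 / 3 - (1 / 3 - ζ ^ 2 * P) - (1 / 3 - ζ ^ 3 * P)
      = 2 / 3 + (ζ ^ 2 + ζ ^ 3) * P by ring,
    show 1 + 1 / 3 - (1 / 3 - ζ * P) = 1 + ζ * P by ring,
    show 1 + 1 / 3 - (1 / 3 - ζ ^ 2 * P) = 1 + ζ ^ 2 * P by ring,
    show 1 + 1 / 3 - (1 / 3 - ζ ^ 3 * P) = 1 + ζ ^ 3 * P by ring,
    rising_reflect (1 / 3 + (ζ + ζ ^ 2 + ζ ^ 3) * P), rising_reflect (1 + 1 / 3),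
    show 1 - (1 / 3 + (ζ + ζ ^ 2 + ζ ^ 3) * P) - (N : K) = 1 + ζ ^ 4 * P by
      linear_combination -hN - P * hζ,
    show 1 - (1 + 1 / 3) - (N : K) = -P by linear_combination -hN] at key
  have hshift : rising (-P) N = p * rising (1 - P) N := by
    have := rising_add_one_mul (-P) N
    rw [hN, neg_add_eq_sub] at this
    linear_combination 3 * this + 3 * rising (1 - P) N * hP
  rw [hshift] at key
  have hV : ∏ i ∈ Finset.range N, ((1 + (i : K)) ^ 2 - P ^ 2)
      = rising (1 + P) N * rising (1 - P) N := by
    simp only [rising, ← Finset.prod_mul_distrib]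
    exact Finset.prod_congr rfl fun i _ => by ring
  rw [hV]
  have hsgn : ((-1 : K) ^ N) * (-1) ^ N = 1 := by rw [← mul_pow]; simp
  generalize (-1 : K) ^ N = s at *
  generalize (∑ k ∈ Finset.range (N + 1), dougallTerm (1 / 3) (1 / 3 - ζ * P) (1 / 3 - ζ ^ 2 * P)
    (1 / 3 - ζ ^ 3 * P) N k) = T at *
  generalize rising (1 + P) N = r0 at *
  generalize rising (1 + ζ * P) N = r1 at *
  generalize rising (1 + ζ ^ 2 * P) N = r2 at *
  generalize rising (1 + ζ ^ 3 * P) N = r3 at *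
  generalize rising (1 + ζ ^ 4 * P) N = r4 at *
  generalize rising (1 - P) N = r5 at *
  generalize rising (2 / 3 + (ζ + ζ ^ 2) * P) N = f1 at *
  generalize rising (2 / 3 + (ζ + ζ ^ 3) * P) N = f2 at *
  generalize rising (2 / 3 + (ζ ^ 2 + ζ ^ 3) * P) N = f3 at *
  linear_combination 3 * r0 * s * key
    + (p * r5 * r0 * f1 * f2 * f3 - 3 * T * r0 * r1 * r2 * r3 * r4) * hsgn

lemma rising_two_thirds_sq (hN : (N : K) = P - 1 / 3)
    (h : ∀ i < N, (2 / 3 + (i : K)) * (2 / 3 + i - P) ≠ 0) (y : K) :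
    rising (2 / 3 + y * P) N ^ 2 = rising (2 / 3) N ^ 2 * ∏ i ∈ Finset.range N,
      (1 + -((y ^ 2 + y) * (P ^ 2 * ((2 / 3 + (i : K)) * (2 / 3 + i - P))⁻¹))) := by
  rw [rising_sq, rising_sq, mul_assoc, ← Finset.prod_mul_distrib]
  congr 1
  refine Finset.prod_congr rfl fun i hi => ?_
  have hi' := h i (Finset.mem_range.mp hi)
  have : (2 / 3 + (i : K)) * (2 / 3 + i - P) * ((2 / 3 + (i : K)) * (2 / 3 + i - P))⁻¹ = 1 :=
    mul_inv_cancel₀ hi'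
  rw [hN]
  linear_combination (y ^ 2 + y) * P ^ 2 * this

end FifthRoots

section Supercongruence

variable {K : Type*} [NormedField K] [IsUltrametricDist K] {ρ : ℝ}

/-- First-order expansions multiply. -/
lemma IntCongr.mul_one_add (hρ : 0 ≤ ρ) (hρ1 : ρ ≤ 1) {x y u v : K}
    (hx : IntCongr (ρ ^ 2) x (1 + u)) (hy : IntCongr (ρ ^ 2) y (1 + v)) (hu : ‖u‖ ≤ ρ)
    (hv : ‖v‖ ≤ ρ) : IntCongr (ρ ^ 2) (x * y) (1 + (u + v)) := by
  refine (hx.mul hy).trans (IntCongr.of_norm_le (pow_le_one₀ hρ hρ1) (hx.mul hy).2.1 ?_)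
  rw [show 1 + (u + v) - (1 + u) * (1 + v) = -(u * v) by ring, norm_neg, norm_mul, sq]
  exact mul_le_mul hu hv (norm_nonneg _) hρ

variable {p N : ℕ}

omit [IsUltrametricDist K] in
lemma norm_one_add_natCast_eq_one (hu : ∀ m : ℕ, 0 < m → m < p → ‖(m : K)‖ = 1) {i : ℕ}
    (hi : i + 1 < p) : ‖(1 + i : K)‖ = 1 := by
  have := hu (1 + i) (by omega) (by omega)
  exact_mod_cast this

omit [IsUltrametricDist K] in
lemma norm_rising_one_eq_one (hu : ∀ m : ℕ, 0 < m → m < p → ‖(m : K)‖ = 1) {k : ℕ} (hk : k < p) :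
    ‖rising (1 : K) k‖ = 1 :=
  norm_prod_eq_one_of_eq fun i hi => norm_one_add_natCast_eq_one hu (by
    rw [Finset.mem_range] at hi; omega)

variable [CharZero K]

lemma norm_third_add_le_one (h3 : ‖(3 : K)‖ = 1) (i : ℕ) : ‖(1 / 3 + i : K)‖ ≤ 1 := by
  have : (1 / 3 + i : K) = ((1 + 3 * i : ℕ) : K) / 3 := by push_cast; ring
  rw [this, norm_div, h3, div_one]
  exact IsUltrametricDist.norm_natCast_le_one K _

omit [IsUltrametricDist K] in
lemma norm_two_thirds_add_eq_one (h3 : ‖(3 : K)‖ = 1)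
    (hu : ∀ m : ℕ, 0 < m → m < p → ‖(m : K)‖ = 1) {i : ℕ} (hi : 3 * i + 2 < p) :
    ‖(2 / 3 + i : K)‖ = 1 := by
  have : (2 / 3 + i : K) = ((3 * i + 2 : ℕ) : K) / 3 := by push_cast; ring
  rw [this, norm_div, h3, div_one]
  exact hu _ (by omega) hi

/-- The summand of the truncated series. -/
def seriesTerm (k : ℕ) : K := (6 * k + 1) * rising (1 / 3) k ^ 6 / rising 1 k ^ 6

lemma norm_rising_third_le_one (h3 : ‖(3 : K)‖ = 1) (k : ℕ) : ‖rising (1 / 3 : K) k‖ ≤ 1 :=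
  norm_prod_le_one_of_le fun i _ => norm_third_add_le_one h3 i

omit [CharZero K] in
lemma norm_six_mul_add_one_le_one (k : ℕ) : ‖(6 * k + 1 : K)‖ ≤ 1 := by
  exact_mod_cast IsUltrametricDist.norm_natCast_le_one K (6 * k + 1)

omit [CharZero K] in
lemma norm_seriesTerm_le (hu : ∀ m : ℕ, 0 < m → m < p → ‖(m : K)‖ = 1) {k : ℕ} (hk : k < p) : ‖(seriesTerm k : K)‖ ≤ ‖rising (1 / 3 : K) k‖ ^ 6 := by
  rw [seriesTerm, norm_div, norm_pow, norm_rising_one_eq_one hu hk, one_pow, div_one, ← norm_pow]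
  exact norm_mul_le_of_le_one (norm_six_mul_add_one_le_one k) le_rfl

lemma norm_rising_third_le (h3 : ‖(3 : K)‖ = 1) (hp : p = 3 * N + 1) {k : ℕ} (hk : N < k) :
    ‖rising (1 / 3 : K) k‖ ≤ ‖(p : K)‖ := by
  rw [rising, ← Finset.mul_prod_erase _ _ (Finset.mem_range.mpr hk), mul_comm]
  refine norm_mul_le_of_le_one (norm_prod_le_one_of_le fun i _ => norm_third_add_le_one h3 i) ?_
  have : (1 / 3 + N : K) = (p : K) / 3 := by rw [hp]; push_cast; ring
  rw [this, norm_div, h3, div_one]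

lemma seriesSum_intCongr (h3 : ‖(3 : K)‖ = 1) (hu : ∀ m : ℕ, 0 < m → m < p → ‖(m : K)‖ = 1)
    (hr : ‖(p : K)‖ < 1) (hp : p = 3 * N + 1) {P : K} (hP : P = p / 3) :
    IntCongr (‖(p : K)‖ ^ 5) (∑ k ∈ Finset.range (N + 1), seriesTerm k)
      (∑ k ∈ Finset.range (N + 1), (6 * (k : K) + 1)
        * (rising (1 / 3) k * ∏ i ∈ Finset.range k, ((1 / 3 + (i : K)) ^ 5 - P ^ 5))
          / (rising 1 k * ∏ i ∈ Finset.range k, ((1 + (i : K)) ^ 5 + P ^ 5))) := by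
  have hP' : ‖P‖ = ‖(p : K)‖ := by rw [hP, norm_div, h3, div_one]
  have hρ : 0 ≤ ‖(p : K)‖ ^ 5 := by positivity
  have hρ1 : ‖(p : K)‖ ^ 5 < 1 := pow_lt_one₀ (norm_nonneg _) hr (by norm_num)
  refine IntCongr.sum hρ fun k hk => ?_
  have hkp : k < p := by rw [Finset.mem_range] at hk; omega
  have hone := norm_rising_one_eq_one hu hkp
  have hterm : (seriesTerm k : K) = (6 * (k : K) + 1)
        * (rising (1 / 3) k * ∏ i ∈ Finset.range k, (1 / 3 + (i : K)) ^ 5)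
          / (rising 1 k * ∏ i ∈ Finset.range k, (1 + (i : K)) ^ 5) := by
    rw [Finset.prod_pow, Finset.prod_pow, seriesTerm]
    simp only [rising]
    ring
  rw [hterm]
  refine IntCongr.div hρ1 ?_ ?_ ?_
  · refine (IntCongr.refl hρ (norm_six_mul_add_one_le_one k)).mul
      ((IntCongr.refl hρ (norm_rising_third_le_one h3 k)).mul (IntCongr.prod hρ fun i _ => ?_))
    refine IntCongr.of_norm_le hρ1.le (norm_pow_le_one_of_le (norm_third_add_le_one h3 i) 5) ?_
    rw [sub_sub_cancel_left, norm_neg, norm_pow, hP']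
  · refine (IntCongr.refl hρ hone.le).mul (IntCongr.prod hρ fun i hi => ?_)
    refine IntCongr.of_norm_le hρ1.le (norm_pow_le_one_of_le
      (norm_one_add_natCast_eq_one hu (by rw [Finset.mem_range] at hi; omega)).le 5) ?_
    rw [add_sub_cancel_left, norm_pow, hP']
  · rw [norm_mul, hone, Finset.prod_pow, norm_pow]
    change 1 * ‖rising (1 : K) k‖ ^ 5 = 1
    rw [hone]; norm_num

omit [IsUltrametricDist K] in
/-- The reflection `x ↦ P - x` of the points `2 / 3 + i` compares two sums of inverse squares. -/
lemma sum_inv_sq_sub_sum_inv_mul {P : K} (hN : (N : K) = P - 1 / 3)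
    (hA : ∀ i < N, (2 / 3 + (i : K)) ≠ 0) :
    ∑ i ∈ Finset.range N, ((2 / 3 + (i : K)) ^ 2)⁻¹
        - ∑ i ∈ Finset.range N, ((2 / 3 + (i : K)) * (2 / 3 + i - P))⁻¹
      = P ^ 2 / 2 * ∑ i ∈ Finset.range N, ((2 / 3 + (i : K)) * (2 / 3 + i - P))⁻¹ ^ 2 := by
  have hrefl {i : ℕ} (hi : i < N) : (2 / 3 + (i : K) - P) = -(2 / 3 + ((N - 1 - i : ℕ) : K)) := by
    rw [Nat.sub_sub, Nat.cast_sub (by omega)]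
    push_cast
    linear_combination hN
  have hA' (i : ℕ) (hi : i < N) : (2 / 3 + (i : K) - P) ≠ 0 := by
    rw [hrefl hi]
    exact neg_ne_zero.mpr (hA _ (by omega))
  have h : ∑ i ∈ Finset.range N, ((2 / 3 + (i : K)) ^ 2)⁻¹
      = ∑ i ∈ Finset.range N, ((2 / 3 + (i : K) - P) ^ 2)⁻¹ := by
    rw [← Finset.sum_range_reflect]
    refine Finset.sum_congr rfl fun i hi => ?_
    rw [hrefl (Finset.mem_range.mp hi), neg_sq]
  have h' : ∑ i ∈ Finset.range N, ((2 / 3 + (i : K)) ^ 2)⁻¹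
      = (∑ i ∈ Finset.range N, ((2 / 3 + (i : K)) ^ 2)⁻¹
        + ∑ i ∈ Finset.range N, ((2 / 3 + (i : K) - P) ^ 2)⁻¹) / 2 := by
    rw [← h]; ring
  rw [h', ← Finset.sum_add_distrib, Finset.sum_div, ← Finset.sum_sub_distrib, Finset.mul_sum]
  refine Finset.sum_congr rfl fun i hi => ?_
  have h1 := hA i (Finset.mem_range.mp hi)
  have h2 := hA' i (Finset.mem_range.mp hi)
  generalize hx : (2 / 3 + (i : K)) = x at *
  field_simp
  ring

omit [IsUltrametricDist K] [CharZero K] in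
lemma norm_eq_one_of_fifth_root {ζ : K} (hζ : 1 + ζ + ζ ^ 2 + ζ ^ 3 + ζ ^ 4 = 0) : ‖ζ‖ = 1 := by
  have h5 : ζ ^ 5 = 1 := by linear_combination (ζ - 1) * hζ
  have : ‖ζ‖ ^ 5 = 1 := by rw [← norm_pow, h5, norm_one]
  exact (pow_eq_one_iff_of_nonneg (norm_nonneg _) (by norm_num)).mp this

lemma sq_seriesSum_eq (h3 : ‖(3 : K)‖ = 1)
    (hu : ∀ m : ℕ, 0 < m → m < p → ‖(m : K)‖ = 1)
    (hr : ‖(p : K)‖ < 1) (hp : p = 3 * N + 1) {P ζ : K} (hP : P = p / 3)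
    (hζ : 1 + ζ + ζ ^ 2 + ζ ^ 3 + ζ ^ 4 = 0) :
    ∃ W : K, IntCongr (‖(p : K)‖ ^ 4) W
        (1 + 2 * (P ^ 2 * ∑ i ∈ Finset.range N, ((2 / 3 + (i : K)) ^ 2)⁻¹
          - P ^ 2 * ∑ i ∈ Finset.range N, ((1 + (i : K)) ^ 2)⁻¹)) ∧
      (∑ k ∈ Finset.range (N + 1), (6 * (k : K) + 1)
        * (rising (1 / 3) k * ∏ i ∈ Finset.range k, ((1 / 3 + (i : K)) ^ 5 - P ^ 5))
          / (rising 1 k * ∏ i ∈ Finset.range k, ((1 + (i : K)) ^ 5 + P ^ 5))) ^ 2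
      = p ^ 2 * (rising (2 / 3) N ^ 6 / rising 1 N ^ 6) * W := by
  have hN : (N : K) = P - 1 / 3 := by rw [hP, hp]; push_cast; ring
  have hP' : ‖P‖ = ‖(p : K)‖ := by rw [hP, norm_div, h3, div_one]
  have hζ1 := norm_eq_one_of_fifth_root hζ
  set r := ‖(p : K)‖ with hrdef
  have hr0 : 0 ≤ r := norm_nonneg _
  have hr20 : 0 ≤ r ^ 2 := by positivity
  have hr21 : r ^ 2 ≤ 1 := pow_le_one₀ hr0 hr.le
  have hr4 : r ^ 4 < 1 := pow_lt_one₀ hr0 hr (by norm_num)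
  have hr22 : (r ^ 2) ^ 2 = r ^ 4 := by ring
  have hone {i : ℕ} (hi : i < N) : ‖(1 + i : K)‖ = 1 := norm_one_add_natCast_eq_one hu (by omega)
  have hone0 {i : ℕ} (hi : i < N) : (1 + i : K) ≠ 0 := norm_ne_zero_iff.mp (by simp [hone hi])
  have hA {i : ℕ} (hi : i < N) : ‖(2 / 3 + i : K)‖ = 1 :=
    norm_two_thirds_add_eq_one h3 hu (by omega)
  have hAP {i : ℕ} (hi : i < N) : ‖(2 / 3 + i - P : K)‖ = 1 := by
    rw [sub_eq_add_neg]
    exact norm_add_eq_one (hA hi) (by rwa [norm_neg, hP'])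
  have hA0 {i : ℕ} (hi : i < N) : (2 / 3 + i : K) ≠ 0 := norm_ne_zero_iff.mp (by simp [hA hi])
  have hAP0 {i : ℕ} (hi : i < N) : (2 / 3 + i : K) * (2 / 3 + i - P) ≠ 0 :=
    norm_ne_zero_iff.mp (by simp [hA hi, hAP hi])
  have hPx {x : K} (hx : ‖x‖ ≤ 1) : ‖P ^ 2 * x‖ ≤ r ^ 2 := by
    rw [mul_comm]
    exact norm_mul_le_of_le_one hx (by rw [norm_pow, hP'])
  have hc {i : ℕ} (hi : i < N) : ‖((2 / 3 + (i : K)) * (2 / 3 + i - P))⁻¹‖ ≤ 1 := by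
    simp [hA hi, hAP hi]
  have hsumP {f : ℕ → K} (hf : ∀ i < N, ‖f i‖ ≤ r ^ 2) : ‖∑ i ∈ Finset.range N, f i‖ ≤ r ^ 2 :=
    IsUltrametricDist.norm_sum_le_of_forall_le_of_nonneg hr20
      fun i hi => hf i (Finset.mem_range.mp hi)
  set Q : K → K := fun y => ∏ i ∈ Finset.range N,
      (1 + -((y ^ 2 + y) * (P ^ 2 * ((2 / 3 + (i : K)) * (2 / 3 + i - P))⁻¹))) with hQ
  set q : K → K := fun y => ∑ i ∈ Finset.range N,
      -((y ^ 2 + y) * (P ^ 2 * ((2 / 3 + (i : K)) * (2 / 3 + i - P))⁻¹)) with hq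
  have hterm {y : K} (hy : ‖y‖ ≤ 1) (i : ℕ) (hi : i < N) :
      ‖-((y ^ 2 + y) * (P ^ 2 * ((2 / 3 + (i : K)) * (2 / 3 + i - P))⁻¹))‖ ≤ r ^ 2 := by
    rw [norm_neg]
    exact norm_mul_le_of_le_one (norm_add_le_of_le_of_le (norm_pow_le_one_of_le hy 2) hy)
      (hPx (hc hi))
  have hQq {y : K} (hy : ‖y‖ ≤ 1) : IntCongr ((r ^ 2) ^ 2) (Q y) (1 + q y) :=
    IntCongr.prod_one_add hr20 hr21 fun i hi => hterm hy i (Finset.mem_range.mp hi)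
  have hqr {y : K} (hy : ‖y‖ ≤ 1) : ‖q y‖ ≤ r ^ 2 := hsumP (hterm hy)
  set E := ∏ i ∈ Finset.range N, (1 + -(P ^ 2 * ((1 + (i : K)) ^ 2)⁻¹)) with hE
  set e := ∑ i ∈ Finset.range N, -(P ^ 2 * ((1 + (i : K)) ^ 2)⁻¹) with he
  have heterm (i : ℕ) (hi : i < N) : ‖-(P ^ 2 * ((1 + (i : K)) ^ 2)⁻¹)‖ ≤ r ^ 2 := by
    rw [norm_neg]
    exact hPx (by simp [hone hi])
  have hEe : IntCongr ((r ^ 2) ^ 2) E (1 + e) :=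
    IntCongr.prod_one_add hr20 hr21 fun i hi => heterm i (Finset.mem_range.mp hi)
  have her : ‖e‖ ≤ r ^ 2 := hsumP heterm
  set H := ∏ i ∈ Finset.range N, (1 + P ^ 5 * ((1 + (i : K)) ^ 5)⁻¹) with hH
  have hH1 : IntCongr ((r ^ 2) ^ 2) 1 H := by
    suffices h : IntCongr (r ^ 4) (∏ _i ∈ Finset.range N, (1 : K)) H by
      rwa [Finset.prod_const_one, ← hr22] at h
    refine IntCongr.prod (by positivity) fun i hi => ?_
    refine IntCongr.of_norm_le hr4.le (by simp) ?_
    rw [add_sub_cancel_left, norm_mul, norm_inv, norm_pow, norm_pow, hone (Finset.mem_range.mp hi),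
      hP']
    simpa using pow_le_pow_of_le_one hr0 hr.le (by norm_num : 4 ≤ 5)
  have hHinv : IntCongr ((r ^ 2) ^ 2) (H⁻¹ ^ 2) 1 := by
    have := ((hH1.inv (by rwa [hr22]) (by simp)).pow (by positivity) 2).symm
    simpa using this
  have hy1 : ‖ζ + ζ ^ 2‖ ≤ 1 :=
    norm_add_le_of_le_of_le hζ1.le (norm_pow_le_one_of_le hζ1.le 2)
  have hy2 : ‖ζ + ζ ^ 3‖ ≤ 1 :=
    norm_add_le_of_le_of_le hζ1.le (norm_pow_le_one_of_le hζ1.le 3)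
  have hy3 : ‖ζ ^ 2 + ζ ^ 3‖ ≤ 1 :=
    norm_add_le_of_le_of_le (norm_pow_le_one_of_le hζ1.le 2) (norm_pow_le_one_of_le hζ1.le 3)
  have hEE := hEe.mul_one_add hr20 hr21 hEe her her
  have her2 := norm_add_le_of_le_of_le her her
  have hQ12 := (hQq hy1).mul_one_add hr20 hr21 (hQq hy2) (hqr hy1) (hqr hy2)
  have hq12 := norm_add_le_of_le_of_le (hqr hy1) (hqr hy2)
  have hQ123 := hQ12.mul_one_add hr20 hr21 (hQq hy3) hq12 (hqr hy3)
  have hq123 := norm_add_le_of_le_of_le hq12 (hqr hy3)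
  have hall := (hEE.mul_one_add hr20 hr21 hQ123 her2 hq123).mul hHinv
  rw [hr22] at hall
  refine ⟨_, hall.trans (IntCongr.of_norm_le hr4.le hall.2.1 ?_), ?_⟩
  · have hqsum : q (ζ + ζ ^ 2) + q (ζ + ζ ^ 3) + q (ζ ^ 2 + ζ ^ 3)
        = 2 * (P ^ 2 * ∑ i ∈ Finset.range N, ((2 / 3 + (i : K)) * (2 / 3 + i - P))⁻¹) := by
      simp only [hq, Finset.sum_neg_distrib, ← Finset.mul_sum]
      generalize P ^ 2 * ∑ i ∈ Finset.range N, ((2 / 3 + (i : K)) * (2 / 3 + i - P))⁻¹ = X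
      have : (ζ + ζ ^ 2) ^ 2 + (ζ + ζ ^ 2) + ((ζ + ζ ^ 3) ^ 2 + (ζ + ζ ^ 3))
          + ((ζ ^ 2 + ζ ^ 3) ^ 2 + (ζ ^ 2 + ζ ^ 3)) = -2 := by grind
      linear_combination -X * this
    have hesum : e = -(P ^ 2 * ∑ i ∈ Finset.range N, ((1 + (i : K)) ^ 2)⁻¹) := by
      rw [he, Finset.sum_neg_distrib, Finset.mul_sum]
    have hdiff := sum_inv_sq_sub_sum_inv_mul hN fun i hi => hA0 hi
    rw [hqsum, hesum]
    rw [sub_eq_iff_eq_add] at hdiff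
    rw [hdiff]
    have hcs : ‖∑ i ∈ Finset.range N, ((2 / 3 + (i : K)) * (2 / 3 + i - P))⁻¹ ^ 2‖ ≤ 1 :=
      IsUltrametricDist.norm_sum_le_of_forall_le_of_nonneg zero_le_one
        fun i hi => norm_pow_le_one_of_le (hc (Finset.mem_range.mp hi)) 2
    generalize ∑ i ∈ Finset.range N, ((2 / 3 + (i : K)) * (2 / 3 + i - P))⁻¹ ^ 2 = c2 at *
    generalize ∑ i ∈ Finset.range N, ((2 / 3 + (i : K)) * (2 / 3 + i - P))⁻¹ = c1 at *
    rw [show ∀ X : K, 1 + 2 * (P ^ 2 * (P ^ 2 / 2 * c2 + c1) - P ^ 2 * X)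
      - (1 + (-(P ^ 2 * X) + -(P ^ 2 * X) + 2 * (P ^ 2 * c1))) * 1 = c2 * P ^ 4 from
        fun X => by ring]
    exact norm_mul_le_of_le_one hcs (by rw [norm_pow, hP'])
  · have key := sum_fifth_root_perturbation hζ hp hP
    have hU : ∏ i ∈ Finset.range N, ((1 + (i : K)) ^ 5 + P ^ 5) = rising 1 N ^ 5 * H := by
      rw [rising, ← Finset.prod_pow, hH, ← Finset.prod_mul_distrib]
      refine Finset.prod_congr rfl fun i hi => ?_
      have := hone0 (Finset.mem_range.mp hi)
      field_simp
    have hV : ∏ i ∈ Finset.range N, ((1 + (i : K)) ^ 2 - P ^ 2) = rising 1 N ^ 2 * E := by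
      rw [rising, ← Finset.prod_pow, hE, ← Finset.prod_mul_distrib]
      refine Finset.prod_congr rfl fun i hi => ?_
      have := hone0 (Finset.mem_range.mp hi)
      field_simp
      ring
    have hF (y : K) : rising (2 / 3 + y * P) N ^ 2 = rising (2 / 3) N ^ 2 * Q y :=
      rising_two_thirds_sq hN (fun i hi => hAP0 hi) y
    have hF1 := hF (ζ + ζ ^ 2)
    have hF2 := hF (ζ + ζ ^ 3)
    have hF3 := hF (ζ ^ 2 + ζ ^ 3)
    rw [hU, hV] at key
    have hH0 : H ≠ 0 := by
      rintro h0
      have := hH1.2.2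
      rw [h0, hr22] at this
      simp only [sub_zero, norm_one] at this
      linarith
    have hR0 : rising (1 : K) N ≠ 0 := rising_one_ne_zero N
    have hsq := congrArg (· ^ 2) key
    simp only [mul_pow, hF1, hF2, hF3] at hsq
    generalize (∑ k ∈ Finset.range (N + 1), (6 * (k : K) + 1)
        * (rising (1 / 3) k * ∏ i ∈ Finset.range k, ((1 / 3 + (i : K)) ^ 5 - P ^ 5))
          / (rising 1 k * ∏ i ∈ Finset.range k, ((1 + (i : K)) ^ 5 + P ^ 5))) = S at *
    clear_value E H
    generalize Q (ζ + ζ ^ 2) = Q1, Q (ζ + ζ ^ 3) = Q2, Q (ζ ^ 2 + ζ ^ 3) = Q3 at hsq ⊢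
    generalize rising (1 : K) N = R at *
    field_simp
    refine mul_right_cancel₀ (pow_ne_zero 4 hR0) ?_
    linear_combination hsq

/-- The supercongruence in an ultrametric field containing the fifth roots of unity. -/
theorem norm_doubleSum_sub_le (hp7 : 3 < p)
    (hu : ∀ m : ℕ, 0 < m → m < p → ‖(m : K)‖ = 1)
    (hr : ‖(p : K)‖ < 1) (hp : p = 3 * N + 1) {ζ : K}
    (hζ : 1 + ζ + ζ ^ 2 + ζ ^ 3 + ζ ^ 4 = 0) :
    ‖∑ i ∈ Finset.range p, ∑ j ∈ Finset.range (p - i), seriesTerm i * (seriesTerm j : K)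
      - rising (2 / 3) N ^ 6 / rising 1 N ^ 6 * ((p : K) ^ 2 + 2 * (p : K) ^ 4
        * ∑ i ∈ Finset.range N, (1 / (3 * (1 + i : K) - 1) ^ 2 - 1 / (3 * (1 + i : K)) ^ 2))‖
      ≤ ‖(p : K)‖ ^ 6 := by
  have h3 : ‖(3 : K)‖ = 1 := by exact_mod_cast hu 3 (by norm_num) hp7
  obtain ⟨P, hP⟩ : ∃ P : K, P = p / 3 := ⟨_, rfl⟩
  obtain ⟨W, hW, hsq⟩ := sq_seriesSum_eq h3 hu hr hp hP hζ
  have hcongr := seriesSum_intCongr h3 hu hr hp hP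
  set S := ∑ k ∈ Finset.range (N + 1), (seriesTerm k : K)
  set S' := ∑ k ∈ Finset.range (N + 1), (6 * (k : K) + 1)
        * (rising (1 / 3) k * ∏ i ∈ Finset.range k, ((1 / 3 + (i : K)) ^ 5 - P ^ 5))
          / (rising 1 k * ∏ i ∈ Finset.range k, ((1 + (i : K)) ^ 5 + P ^ 5))
  set r := ‖(p : K)‖
  have hr0 : 0 ≤ r := norm_nonneg _
  have hA : ‖rising (2 / 3 : K) N ^ 6 / rising 1 N ^ 6‖ ≤ 1 := by
    rw [norm_div, norm_pow, norm_pow, norm_rising_one_eq_one hu (by omega), one_pow, div_one]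
    exact pow_le_one₀ (norm_nonneg _) (norm_prod_le_one_of_le fun i hi =>
      (norm_two_thirds_add_eq_one h3 hu (by rw [Finset.mem_range] at hi; omega)).le)
  have hS' : ‖S'‖ ≤ r := by
    refine le_of_sq_le_sq ?_ hr0
    rw [← norm_pow, hsq, mul_assoc, mul_comm, ← norm_pow]
    exact norm_mul_le_of_le_one (norm_mul_le_of_le_one hA hW.1) le_rfl
  have hdiff : ‖S - S'‖ ≤ r ^ 5 := hcongr.2.2
  have hS : ‖S ^ 2 - S' ^ 2‖ ≤ r ^ 6 := by
    rw [show S ^ 2 - S' ^ 2 = (S - S') * ((S - S') + S' + S') by ring, norm_mul, pow_succ r 5]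
    refine mul_le_mul hdiff (norm_add_le_of_le_of_le (norm_add_le_of_le_of_le
      (hdiff.trans ?_) hS') hS') (norm_nonneg _) (by positivity)
    exact pow_le_of_le_one hr0 hr.le (by norm_num)
  have htri := norm_triangle_sum_sub_sq_le (p := p) (N := N) (ρ := r ^ 6)
    (t := fun k => (seriesTerm k : K)) (by omega) (by positivity)
    (fun k hk => (norm_seriesTerm_le hu hk).trans
      (pow_le_one₀ (norm_nonneg _) (norm_rising_third_le_one h3 k)))
    (fun k hk hNk => (norm_seriesTerm_le hu hk).trans
      (pow_le_pow_left₀ (norm_nonneg _) (norm_rising_third_le h3 hp hNk) 6))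
  have hrhs : (p : K) ^ 2 + 2 * (p : K) ^ 4
        * ∑ i ∈ Finset.range N, (1 / (3 * (1 + i : K) - 1) ^ 2 - 1 / (3 * (1 + i : K)) ^ 2)
      = p ^ 2 * (1 + 2 * (P ^ 2 * ∑ i ∈ Finset.range N, ((2 / 3 + (i : K)) ^ 2)⁻¹
          - P ^ 2 * ∑ i ∈ Finset.range N, ((1 + (i : K)) ^ 2)⁻¹)) := by
    have hi (i : ℕ) : 1 / (3 * (1 + i : K) - 1) ^ 2 - 1 / (3 * (1 + i : K)) ^ 2
        = 1 / 9 * (((2 / 3 + (i : K)) ^ 2)⁻¹ - ((1 + (i : K)) ^ 2)⁻¹) := by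
      rw [show 3 * (1 + i : K) - 1 = 3 * (2 / 3 + i) by ring, mul_pow, mul_pow]
      simp only [one_div, mul_inv]
      ring
    simp only [hi]
    rw [← Finset.mul_sum, Finset.sum_sub_distrib, hP]
    ring
  rw [hrhs]
  set A := rising (2 / 3 : K) N ^ 6 / rising 1 N ^ 6
  set B := 1 + 2 * (P ^ 2 * ∑ i ∈ Finset.range N, ((2 / 3 + (i : K)) ^ 2)⁻¹
          - P ^ 2 * ∑ i ∈ Finset.range N, ((1 + (i : K)) ^ 2)⁻¹)
  have hlast : ‖S' ^ 2 - A * (p ^ 2 * B)‖ ≤ r ^ 6 := by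
    rw [hsq, show (p : K) ^ 2 * A * W - A * (p ^ 2 * B) = A * (p ^ 2 * (W - B)) by ring]
    refine norm_mul_le_of_le_one hA ?_
    rw [norm_mul, norm_pow, show r ^ 6 = r ^ 2 * r ^ 4 by ring]
    exact mul_le_mul_of_nonneg_left hW.2.2 (by positivity)
  have := norm_add_le_of_le_of_le (norm_add_le_of_le_of_le htri hS) hlast
  convert this using 2
  ring

end Supercongruence

section PadicTransfer

variable {p : ℕ} [Fact p.Prime]

lemma norm_ratCast_padicAlgCl (q : ℚ) : ‖(q : PadicAlgCl p)‖ = ‖(q : ℚ_[p])‖ := by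
  rw [← PadicAlgCl.norm_extends p (q : ℚ_[p])]
  congr 1

lemma norm_natCast_padicAlgCl (m : ℕ) : ‖(m : PadicAlgCl p)‖ = ‖(m : ℚ_[p])‖ := by
  exact_mod_cast norm_ratCast_padicAlgCl (p := p) (m : ℚ)

lemma norm_natCast_padicAlgCl_eq_one {m : ℕ} (h0 : 0 < m) (hm : m < p) :
    ‖(m : PadicAlgCl p)‖ = 1 := by
  rw [norm_natCast_padicAlgCl, Padic.norm_natCast_eq_one_iff]
  exact Nat.coprime_of_lt_prime h0.ne' hm Fact.out

lemma exists_fifth_root {K : Type*} [Field K] [IsAlgClosed K] [CharZero K] :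
    ∃ ζ : K, 1 + ζ + ζ ^ 2 + ζ ^ 3 + ζ ^ 4 = 0 := by
  obtain ⟨ζ, hζ⟩ := HasEnoughRootsOfUnity.exists_primitiveRoot K 5
  refine ⟨ζ, ?_⟩
  have := hζ.geom_sum_eq_zero (by norm_num)
  simpa [Finset.sum_range_succ] using this

/-- A rational number of `p`-adic absolute value at most `p ^ (-n)` has numerator divisible by
`p ^ n`. -/
lemma pow_dvd_num_of_norm_le {q : ℚ} {n : ℕ} (h : ‖(q : ℚ_[p])‖ ≤ ‖(p : ℚ_[p])‖ ^ n) :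
    (p : ℤ) ^ n ∣ q.num := by
  rw [← Padic.norm_int_le_pow_iff_dvd]
  have hq : (q.num : ℚ_[p]) = q.den * q := by
    exact_mod_cast congrArg (Rat.cast : ℚ → ℚ_[p]) (Rat.den_mul_eq_num q).symm
  rw [hq, zpow_neg, zpow_natCast, ← inv_pow, ← Padic.norm_p]
  exact norm_mul_le_of_le_one (IsUltrametricDist.norm_natCast_le_one _ _) h

lemma cast_rf {K : Type*} [Field K] [CharZero K] (x : ℚ) (k : ℕ) :
    ((rf x k : ℚ) : K) = rising (x : K) k := by
  simp [rf, rising]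

end PadicTransfer

/-- Corollary 1.2: for a prime `p ≡ 1 (mod 6)`,
`∑_{i+j≤p-1} (6i+1)(6j+1) (1/3)_i⁶(1/3)_j⁶/((1)_i⁶(1)_j⁶)
  ≡ ((2/3)_{(p-1)/3}⁶/(1)_{(p-1)/3}⁶)·{p² + 2p⁴ ∑_{r=1}^{(p-1)/3}(1/(3r-1)² - 1/(3r)²)}
(mod p⁶)`, i.e. `p⁶` divides the numerator of the difference. -/
theorem stmt_9 (p : ℕ) (hp : p.Prime) (h6 : p % 6 = 1) :
    (p : ℤ) ^ 6 ∣
      ((∑ i ∈ Finset.range p, ∑ j ∈ Finset.range (p - i),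
          ((6 * (i : ℚ) + 1) * (6 * (j : ℚ) + 1))
            * (rf (1/3) i ^ 6 * rf (1/3) j ^ 6) / (rf 1 i ^ 6 * rf 1 j ^ 6))
        - rf (2/3) ((p - 1) / 3) ^ 6 / rf 1 ((p - 1) / 3) ^ 6
          * ((p : ℚ) ^ 2 + 2 * (p : ℚ) ^ 4
            * ∑ r ∈ Finset.Icc 1 ((p - 1) / 3),
                ((1 : ℚ) / (3 * (r : ℚ) - 1) ^ 2 - 1 / (3 * (r : ℚ)) ^ 2))).num := by
  have := Fact.mk hp
  have h2 := hp.two_le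
  obtain ⟨N, rfl⟩ : ∃ N, p = 3 * N + 1 := ⟨(p - 1) / 3, by omega⟩
  rw [show (3 * N + 1 - 1) / 3 = N by omega, ← Finset.Ico_add_one_right_eq_Icc,
    Finset.sum_Ico_eq_sum_range]
  obtain ⟨ζ, hζ⟩ := exists_fifth_root (K := PadicAlgCl (3 * N + 1))
  have hr : ‖((3 * N + 1 : ℕ) : PadicAlgCl (3 * N + 1))‖ < 1 := by
    rw [norm_natCast_padicAlgCl]
    exact Padic.norm_p_lt_one
  have key := norm_doubleSum_sub_le (by omega)
    (fun m h0 hm => norm_natCast_padicAlgCl_eq_one h0 hm) hr rfl hζ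
  refine pow_dvd_num_of_norm_le ?_
  rw [← norm_ratCast_padicAlgCl, ← norm_natCast_padicAlgCl]
  convert key using 2
  rw [Rat.cast_sub, Rat.cast_sum]
  congr 1
  · refine Finset.sum_congr rfl fun i _ => ?_
    rw [Rat.cast_sum]
    refine Finset.sum_congr rfl fun j _ => ?_
    push_cast [cast_rf, seriesTerm]
    ring
  · push_cast [cast_rf]
    rfl
end

section
/- Let p be a prime with p ≡ 1 (mod 6). Then ∑_{i+j+k ≤ p-1, i,j,k ≥ 0} (6i+1)(6j+1)(6k+1)·((1/3)_i⁶(1/3)_j⁶(1/3)_k⁶)/((1)_i⁶(1)_j⁶(1)_k⁶) ≡ ((2/3)_{(p-1)/3}⁹/(1)_{(p-1)/3}⁹)·{p³ - p⁵·H_{(p-1)/3}^{(2)}} (mod p⁶), as a congruence of rational numbers with denominators coprime to p, where H_n^{(2)} = ∑_{r=1}^n 1/r². -/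
/-! ### A terminating very-well-poised summation -/

/-- The summand of the terminating very-well-poised series with parameters `±√Y`, `±(n + 1/3)`. -/
def wpTerm (Y : ℚ) (n k : ℕ) : ℚ :=
  (6 * (k : ℚ) + 1) * ∏ i ∈ Finset.range k,
    ((1 / 3 + (i : ℚ)) ^ 2 / (1 + (i : ℚ)) ^ 2
      * (((1 / 3 + (i : ℚ)) ^ 2 - Y) / ((1 + (i : ℚ)) ^ 2 - Y))
      * (((1 / 3 + (i : ℚ)) ^ 2 - ((n : ℚ) + 1 / 3) ^ 2)
        / ((1 + (i : ℚ)) ^ 2 - ((n : ℚ) + 1 / 3) ^ 2)))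

/-- The closed form of the sum of `wpTerm Y n`. -/
def wpSum (Y : ℚ) (n : ℕ) : ℚ :=
  (3 * (n : ℚ) + 1) * ∏ i ∈ Finset.range n,
    ((2 / 3 + (i : ℚ)) / (1 + (i : ℚ))
      * (((2 / 3 + (i : ℚ)) ^ 2 - Y) / ((1 + (i : ℚ)) ^ 2 - Y)))

lemma three_mul_sub_ne (n k : ℕ) : (3 * (n : ℚ) + 1 - 3 * k) ≠ 0 := by
  intro h
  have : 3 * (n : ℤ) + 1 - 3 * k = 0 := by exact_mod_cast h
  omega

lemma sq_sub_ne {Y : ℚ} (hY : Y < 0) (x : ℚ) : x ^ 2 - Y ≠ 0 := by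
  nlinarith [sq_nonneg x]

lemma wp_den_factor (n i : ℕ) : (1 + (i : ℚ)) ^ 2 - ((n : ℚ) + 1 / 3) ^ 2
    = -((3 * (n : ℚ) + 1 - 3 * ((i + 1 : ℕ) : ℚ)) * (3 * i + 3 * n + 4)) / 9 := by
  push_cast; ring

lemma wp_num_factor (n i : ℕ) : (1 / 3 + (i : ℚ)) ^ 2 - ((n : ℚ) + 1 / 3) ^ 2
    = ((i : ℚ) - n) * (3 * i + 3 * n + 2) / 3 := by
  ring

lemma wpTerm_succ (Y : ℚ) (n k : ℕ) :
    wpTerm Y n (k + 1) = wpTerm Y n k * ((6 * (k : ℚ) + 7) / (6 * k + 1)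
      * ((1 / 3 + (k : ℚ)) ^ 2 / (1 + (k : ℚ)) ^ 2
      * (((1 / 3 + (k : ℚ)) ^ 2 - Y) / ((1 + (k : ℚ)) ^ 2 - Y))
      * ((((k : ℚ) - n) * (3 * k + 3 * n + 2) / 3)
        / (-((3 * (n : ℚ) + 1 - 3 * ((k + 1 : ℕ) : ℚ)) * (3 * k + 3 * n + 4)) / 9)))) := by
  have h : (6 * (k : ℚ) + 1) ≠ 0 := by positivity
  rw [wpTerm, wpTerm, Finset.prod_range_succ, wp_den_factor, wp_num_factor]
  push_cast
  field_simp
  ring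

lemma wpTerm_eq_succ_mul {Y : ℚ} (hY : Y < 0) (n k : ℕ) :
    wpTerm Y n k = wpTerm Y (n + 1) k *
      (((n : ℚ) + 1 - k) * (3 * n + 2) * (3 * n + 1) * (3 * k + 3 * n + 4)
        / ((n + 1) * (3 * k + 3 * n + 2) * (3 * n + 1 - 3 * k) * (3 * n + 4))) := by
  induction k with
  | zero =>
    have h1 : (3 * (n : ℚ) + 1) ≠ 0 := by positivity
    simp only [wpTerm]
    simp
    field_simp
  | succ k ih =>
    rw [wpTerm_succ, wpTerm_succ, ih]
    have h0 := three_mul_sub_ne n k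
    have h1 := three_mul_sub_ne n (k + 1)
    have h2 := three_mul_sub_ne (n + 1) (k + 1)
    have h3 := sq_sub_ne hY (1 + (k : ℚ))
    have h2' : (3 * ((n : ℚ) + 1) + 1 - 3 * ((k : ℚ) + 1)) = 3 * (n : ℚ) + 1 - 3 * k := by ring
    push_cast at h1 h2 ⊢
    rw [h2']
    rw [show (3 * ((k : ℚ) + 1) + 3 * n + 4) = 3 * k + 3 * n + 7 by ring,
      show (3 * (k : ℚ) + 3 * (n + 1) + 4) = 3 * k + 3 * n + 7 by ring,
      show (3 * (k : ℚ) + 3 * (n + 1) + 2) = 3 * k + 3 * n + 5 by ring,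
      show (3 * ((k : ℚ) + 1) + 3 * n + 2) = 3 * k + 3 * n + 5 by ring]
    field_simp
    ring

lemma sum_wpTerm_succ_sub {Y : ℚ} (hY : Y < 0) (n K : ℕ) :
    ∑ k ∈ Finset.range K, (wpTerm Y (n + 1) k
      - (3 * (n : ℚ) + 4) / (3 * n + 1) * ((2 / 3 + (n : ℚ)) / (1 + (n : ℚ))
      * (((2 / 3 + (n : ℚ)) ^ 2 - Y) / ((1 + (n : ℚ)) ^ 2 - Y))) * wpTerm Y n k)
    = -((6 * (n : ℚ) + 5) * K ^ 2 * (K ^ 2 - Y) * (3 * K + 3 * n + 4)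
      / ((6 * K + 1) * (3 * K + 3 * n + 2) * (1 + n) ^ 2 * ((1 + n) ^ 2 - Y)))
      * wpTerm Y (n + 1) K := by
  induction K with
  | zero => simp
  | succ k ih =>
    rw [Finset.sum_range_succ, ih, wpTerm_succ, wpTerm_eq_succ_mul hY n k]
    have h0 := three_mul_sub_ne n k
    have h2 := three_mul_sub_ne (n + 1) (k + 1)
    have h3 := sq_sub_ne hY (1 + (k : ℚ))
    have h4 := sq_sub_ne hY (1 + (n : ℚ))
    have h2' : (3 * ((n : ℚ) + 1) + 1 - 3 * ((k : ℚ) + 1)) = 3 * (n : ℚ) + 1 - 3 * k := by ring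
    push_cast at h2 ⊢
    rw [h2']
    rw [show (3 * ((k : ℚ) + 1) + 3 * n + 4) = 3 * k + 3 * n + 7 by ring,
      show (3 * (k : ℚ) + 3 * (n + 1) + 4) = 3 * k + 3 * n + 7 by ring,
      show (3 * (k : ℚ) + 3 * (n + 1) + 2) = 3 * k + 3 * n + 5 by ring,
      show (3 * ((k : ℚ) + 1) + 3 * n + 2) = 3 * k + 3 * n + 5 by ring,
      show ((k : ℚ) + 1) ^ 2 = (1 + (k : ℚ)) ^ 2 by ring,
      show (6 * ((k : ℚ) + 1) + 1) = 6 * k + 7 by ring]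
    obtain ⟨D, hD⟩ : ∃ D, D = 3 * (n : ℚ) + 1 - 3 * k := ⟨_, rfl⟩
    rw [← hD] at h0 ⊢
    field_simp
    rw [hD]
    ring

lemma wpTerm_eq_zero {Y : ℚ} {n k : ℕ} (h : n < k) : wpTerm Y n k = 0 := by
  rw [wpTerm, Finset.prod_eq_zero (Finset.mem_range.2 h), mul_zero]
  simp [add_comm]

theorem sum_wpTerm {Y : ℚ} (hY : Y < 0) (n : ℕ) :
    ∑ k ∈ Finset.range (n + 1), wpTerm Y n k = wpSum Y n := by
  induction n with
  | zero => simp [wpTerm, wpSum]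
  | succ n ih =>
    have h := sum_wpTerm_succ_sub hY n (n + 2)
    rw [wpTerm_eq_zero (k := n + 2) (by omega), mul_zero, Finset.sum_sub_distrib,
      ← Finset.mul_sum, Finset.sum_range_succ (wpTerm Y n), wpTerm_eq_zero (k := n + 1) (by omega),
      add_zero, ih, sub_eq_zero] at h
    rw [h, wpSum, wpSum, Finset.prod_range_succ]
    have h4 := sq_sub_ne hY (1 + (n : ℚ))
    have h1 : (3 * (n : ℚ) + 1) ≠ 0 := by positivity
    push_cast
    field_simp
    ring

/-! ### Divisibility of rationals by prime powers -/

/-- `p ^ m` divides the rational `x` in the localization of `ℤ` at `p`. -/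
def PadicDvd (p m : ℕ) (x : ℚ) : Prop := padicNorm p x ≤ (p : ℚ) ^ (-(m : ℤ))

/-- The rational `x` is a unit of the localization of `ℤ` at `p`. -/
def PadicUnit (p : ℕ) (x : ℚ) : Prop := padicNorm p x = 1

section PadicDvd

variable {p m n : ℕ} {x y z w : ℚ}

lemma padicDvd_zero (m : ℕ) : PadicDvd p m 0 := by
  simp only [PadicDvd, padicNorm.zero]; positivity

lemma PadicDvd.neg (hx : PadicDvd p m x) : PadicDvd p m (-x) := by
  simpa [PadicDvd] using hx

lemma PadicUnit.ne_zero (hx : PadicUnit p x) : x ≠ 0 := by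
  rintro rfl; simp [PadicUnit] at hx

lemma PadicUnit.integral (hx : PadicUnit p x) : PadicDvd p 0 x := by
  simpa [PadicDvd] using hx.le

lemma PadicUnit.one : PadicUnit p 1 := padicNorm.one

variable [hp : Fact p.Prime]

lemma padicDvd_natCast (a : ℕ) : PadicDvd p 0 a := by
  simpa [PadicDvd] using padicNorm.of_nat (p := p) a

lemma padicDvd_pow (m : ℕ) : PadicDvd p m ((p : ℚ) ^ m) := by
  have h := (padicNorm.dvd_iff_norm_le (p := p) (n := m) (z := (p : ℤ) ^ m)).1 (by simp)
  simpa [PadicDvd] using h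

namespace PadicDvd

lemma add (hx : PadicDvd p m x) (hy : PadicDvd p m y) : PadicDvd p m (x + y) :=
  padicNorm.nonarchimedean.trans (max_le hx hy)

lemma sub (hx : PadicDvd p m x) (hy : PadicDvd p m y) : PadicDvd p m (x - y) :=
  padicNorm.sub.trans (max_le hx hy)

lemma mul (hx : PadicDvd p m x) (hy : PadicDvd p n y) : PadicDvd p (m + n) (x * y) := by
  have h0 : (p : ℚ) ≠ 0 := by exact_mod_cast hp.out.ne_zero
  rw [PadicDvd, padicNorm.mul, Nat.cast_add, neg_add, zpow_add₀ h0]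
  exact mul_le_mul hx hy (padicNorm.nonneg _) (by positivity)

lemma mono (hx : PadicDvd p m x) (h : n ≤ m) : PadicDvd p n x := by
  refine le_trans hx (zpow_le_zpow_right₀ ?_ (by omega))
  exact_mod_cast hp.out.one_le

lemma mul_integral (hx : PadicDvd p m x) (hy : PadicDvd p 0 y) : PadicDvd p m (x * y) :=
  hx.mul hy

lemma pow (hx : PadicDvd p m x) (k : ℕ) : PadicDvd p (k * m) (x ^ k) := by
  induction k with
  | zero => simpa using padicDvd_natCast (p := p) 1
  | succ k ih => rw [pow_succ, add_mul, one_mul]; exact ih.mul hx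

lemma pow_integral (hx : PadicDvd p 0 x) (k : ℕ) : PadicDvd p 0 (x ^ k) := by
  simpa using hx.pow k

lemma sum {ι : Type*} {s : Finset ι} {f : ι → ℚ} (h : ∀ i ∈ s, PadicDvd p m (f i)) :
    PadicDvd p m (∑ i ∈ s, f i) :=
  Finset.sum_induction f (PadicDvd p m) (fun _ _ => add) (padicDvd_zero m) h

lemma prod_integral {ι : Type*} {s : Finset ι} {f : ι → ℚ} (h : ∀ i ∈ s, PadicDvd p 0 (f i)) :
    PadicDvd p 0 (∏ i ∈ s, f i) :=
  Finset.prod_induction f (PadicDvd p 0) (fun _ _ => mul_integral)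
    (by simpa using padicDvd_natCast (p := p) 1) h

lemma div_unit (hx : PadicDvd p m x) (hy : PadicUnit p y) : PadicDvd p m (x / y) := by
  rwa [PadicDvd, padicNorm.div, hy, div_one]

lemma trans (hxy : PadicDvd p m (x - y)) (hyz : PadicDvd p m (y - z)) : PadicDvd p m (x - z) := by
  simpa using hxy.add hyz

lemma mul_sub_mul (hxy : PadicDvd p m (x - y)) (hzw : PadicDvd p m (z - w))
    (hx : PadicDvd p 0 x) (hw : PadicDvd p 0 w) : PadicDvd p m (x * z - y * w) := by
  have h := (hzw.mul_integral hx).add (hxy.mul_integral hw)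
  convert h using 1; ring

lemma prod_sub_prod {ι : Type*} {s : Finset ι} {f g : ι → ℚ}
    (h : ∀ i ∈ s, PadicDvd p m (f i - g i)) (hf : ∀ i ∈ s, PadicDvd p 0 (f i))
    (hg : ∀ i ∈ s, PadicDvd p 0 (g i)) : PadicDvd p m (∏ i ∈ s, f i - ∏ i ∈ s, g i) := by
  classical
  induction s using Finset.induction_on with
  | empty => simpa using padicDvd_zero m
  | insert a s ha ih =>
    simp only [Finset.forall_mem_insert] at h hf hg
    rw [Finset.prod_insert ha, Finset.prod_insert ha]
    exact mul_sub_mul h.1 (ih h.2 hf.2 hg.2) hf.1 (prod_integral hg.2)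

end PadicDvd

namespace PadicUnit

lemma of_nat {a : ℕ} (h : ¬ p ∣ a) : PadicUnit p a := (padicNorm.nat_eq_one_iff a).2 h

lemma mul (hx : PadicUnit p x) (hy : PadicUnit p y) : PadicUnit p (x * y) := by
  rw [PadicUnit, padicNorm.mul, hx, hy, one_mul]

lemma div (hx : PadicUnit p x) (hy : PadicUnit p y) : PadicUnit p (x / y) := by
  rw [PadicUnit, padicNorm.div, hx, hy, one_div_one]

lemma pow (hx : PadicUnit p x) (k : ℕ) : PadicUnit p (x ^ k) := by
  induction k with
  | zero => simpa using one
  | succ k ih => rw [pow_succ]; exact ih.mul hx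

lemma prod {ι : Type*} {s : Finset ι} {f : ι → ℚ} (h : ∀ i ∈ s, PadicUnit p (f i)) :
    PadicUnit p (∏ i ∈ s, f i) :=
  Finset.prod_induction f (PadicUnit p) (fun _ _ => mul) one h

lemma add_of_dvd (hx : PadicUnit p x) (hy : PadicDvd p (m + 1) y) : PadicUnit p (x + y) := by
  have hp1 : (1 : ℚ) < p := by exact_mod_cast hp.out.one_lt
  have hlt : padicNorm p y < 1 :=
    lt_of_le_of_lt hy (zpow_lt_one_of_neg₀ hp1 (by omega))
  rw [PadicUnit] at hx ⊢
  rw [padicNorm.add_eq_max_of_ne (by rw [hx]; exact hlt.ne'), hx, max_eq_left hlt.le]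

lemma sub_of_dvd (hx : PadicUnit p x) (hy : PadicDvd p (m + 1) y) : PadicUnit p (x - y) := by
  rw [sub_eq_add_neg]; exact hx.add_of_dvd hy.neg

end PadicUnit

lemma PadicDvd.div_sub_div (hxy : PadicDvd p m (x - y)) (hzw : PadicDvd p m (z - w))
    (hx : PadicDvd p 0 x) (hz : PadicUnit p z) (hw : PadicUnit p w) :
    PadicDvd p m (x / z - y / w) := by
  have h := ((hxy.mul_integral hz.integral).sub (hzw.mul_integral hx)).div_unit (hz.mul hw)
  convert h using 1
  have := hz.ne_zero
  have := hw.ne_zero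
  field_simp
  ring

lemma padicDvd_prod_one_add {ι : Type*} {s : Finset ι} {f : ι → ℚ}
    (hx : PadicDvd p m x) (hf : ∀ i ∈ s, PadicDvd p 0 (f i)) :
    PadicDvd p (m + m) (∏ i ∈ s, (1 + x * f i) - (1 + x * ∑ i ∈ s, f i)) := by
  classical
  induction s using Finset.induction_on with
  | empty => simpa using padicDvd_zero (m + m)
  | insert a s ha ih =>
    simp only [Finset.forall_mem_insert] at hf
    rw [Finset.prod_insert ha, Finset.sum_insert ha]
    have h1 : PadicDvd p 0 (1 + x * f a) :=
      PadicUnit.one.integral.add ((hx.mono (Nat.zero_le m)).mul_integral hf.1)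
    have h2 := ((ih hf.2).mul_integral h1).add
      ((hx.mul hx).mul_integral (hf.1.mul_integral (PadicDvd.sum hf.2)))
    convert h2 using 1
    ring

lemma PadicDvd.dvd_num (hx : PadicDvd p m x) : (p : ℤ) ^ m ∣ x.num := by
  have h := hx.mul_integral (padicDvd_natCast x.den)
  rw [Rat.mul_den_eq_num] at h
  have := padicNorm.dvd_iff_norm_le.2 h
  exact_mod_cast this

/-- If `p ^ m` divides `a k` for `N < k < p`, then the simplex sum of `a i * a j * a k` is
congruent to a cube. -/
lemma padicDvd_simplex_sum_sub_cube {N : ℕ} (hN : 3 * N < p) {a : ℕ → ℚ}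
    (h0 : ∀ k < p, PadicDvd p 0 (a k)) (hm : ∀ k < p, N < k → PadicDvd p m (a k)) :
    PadicDvd p m (∑ i ∈ Finset.range p, ∑ j ∈ Finset.range (p - i),
      ∑ k ∈ Finset.range (p - i - j), a i * a j * a k
      - (∑ k ∈ Finset.range (N + 1), a k) ^ 3) := by
  set b : ℕ → ℚ := fun k => if k ≤ N then a k else 0 with hb
  set S := ∑ k ∈ Finset.range (N + 1), a k with hS
  have hsum : ∀ M, N < M → ∑ k ∈ Finset.range M, b k = S := by
    intro M hM
    rw [hS, ← Finset.sum_subset (Finset.range_mono hM : Finset.range (N + 1) ⊆ Finset.range M)]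
    · refine Finset.sum_congr rfl fun k hk => if_pos ?_
      simp at hk; omega
    · intro k _ hk
      refine if_neg ?_
      simp at hk; omega
  have hcube : S ^ 3 = ∑ i ∈ Finset.range p, ∑ j ∈ Finset.range (p - i),
      ∑ k ∈ Finset.range (p - i - j), b i * b j * b k := by
    have hk : ∀ i j, ∑ k ∈ Finset.range (p - i - j), b i * b j * b k = b i * b j * S := by
      intro i j
      rw [← Finset.mul_sum]
      by_cases hi : i ≤ N
      · by_cases hj : j ≤ N
        · rw [hsum _ (by omega)]
        · simp [hb, hj]
      · simp [hb, hi]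
    have hj : ∀ i, ∑ j ∈ Finset.range (p - i), b i * b j * S = b i * S * S := by
      intro i
      rw [← Finset.sum_mul, ← Finset.mul_sum]
      by_cases hi : i ≤ N
      · rw [hsum _ (by omega)]
      · simp [hb, hi]
    simp only [hk, hj]
    rw [← Finset.sum_mul, ← Finset.sum_mul, hsum _ (by omega)]
    ring
  have hab : ∀ k < p, PadicDvd p m (a k - b k) := by
    intro k hk
    by_cases h : k ≤ N
    · simpa [hb, h] using padicDvd_zero m
    · simpa [hb, h] using hm k hk (by omega)
  have hb0 : ∀ k < p, PadicDvd p 0 (b k) := by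
    intro k hk
    by_cases h : k ≤ N
    · simpa [hb, h] using h0 k hk
    · simpa [hb, h] using padicDvd_zero 0
  simp only [hcube, ← Finset.sum_sub_distrib]
  refine PadicDvd.sum fun i hi => PadicDvd.sum fun j hj => PadicDvd.sum fun k hk => ?_
  simp only [Finset.mem_range] at hi hj hk
  exact ((hab i hi).mul_sub_mul (hab j (by omega)) (h0 i hi) (hb0 j (by omega))).mul_sub_mul
    (hab k (by omega)) ((h0 i hi).mul_integral (h0 j (by omega))) (hb0 k (by omega))

end PadicDvd

/-! ### Sums of inverse squares -/

section InverseSquares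

variable {p : ℕ} [hp : Fact p.Prime]

lemma PadicUnit.of_lt {a : ℕ} (h0 : 0 < a) (h : a < p) : PadicUnit p a :=
  PadicUnit.of_nat (Nat.not_dvd_of_pos_of_lt h0 h)

lemma padicDvd_one_of_zmod {a : ℤ} (h : (a : ZMod p) = 0) : PadicDvd p 1 a := by
  have := (ZMod.intCast_zmod_eq_zero_iff_dvd a p).1 h
  exact padicNorm.dvd_iff_norm_le.1 (by simpa using this)

lemma padicDvd_sum_inv_sq (h5 : 3 < p) :
    PadicDvd p 1 (∑ m ∈ Finset.range (p - 1), 1 / ((m + 1 : ℕ) : ℚ) ^ 2) := by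
  have h1 : PadicDvd p 1 (∑ m ∈ Finset.range (p - 1), (1 / ((m + 1 : ℕ) : ℚ) ^ 2
      - ((m + 1 : ℕ) : ℚ) ^ (p - 3))) := by
    refine PadicDvd.sum fun m hm => ?_
    rw [Finset.mem_range] at hm
    have hu : PadicUnit p ((m + 1 : ℕ) : ℚ) := .of_lt (by omega) (by omega)
    have hz : (((m + 1 : ℕ) : ZMod p)) ≠ 0 := by
      rw [Ne, ZMod.natCast_eq_zero_iff]
      exact Nat.not_dvd_of_pos_of_lt (by omega) (by omega)
    have h2 : PadicDvd p 1 ((1 - ((m + 1 : ℕ) : ℤ) ^ (p - 1) : ℤ) : ℚ) := by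
      apply padicDvd_one_of_zmod
      push_cast at hz ⊢
      rw [ZMod.pow_card_sub_one_eq_one hz, sub_self]
    have h3 := h2.div_unit (hu.pow 2)
    convert h3 using 1
    have := hu.ne_zero
    rw [show p - 1 = p - 3 + 2 by omega]
    push_cast at this ⊢
    field_simp
    ring
  have h2 : PadicDvd p 1 ((∑ m ∈ Finset.range (p - 1), ((m + 1 : ℕ) : ℤ) ^ (p - 3) : ℤ) : ℚ) := by
    apply padicDvd_one_of_zmod
    have h := FiniteField.sum_pow_lt_card_sub_one (ZMod p) (p - 3) (by rw [ZMod.card]; omega)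
    have h3 : ∑ x : ZMod p, x ^ (p - 3) = ∑ m ∈ Finset.range p, ((m : ℕ) : ZMod p) ^ (p - 3) := by
      refine (Finset.sum_nbij' (fun m : ℕ => (m : ZMod p)) ZMod.val ?_ ?_ ?_ ?_ ?_).symm
      · simp
      · intro x _; simpa using ZMod.val_lt x
      · intro m hm; exact ZMod.val_cast_of_lt (by simpa using hm)
      · intro x _; simp
      · simp
    have hr : Finset.range p = Finset.range (p - 1 + 1) := by congr; omega
    rw [h3, hr, Finset.sum_range_succ', Nat.cast_zero, zero_pow (by omega), add_zero] at h
    exact_mod_cast h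
  rw [Finset.sum_sub_distrib] at h1
  push_cast at h1 h2 ⊢
  simpa using h1.add h2

lemma sum_range_three_mul (f : ℕ → ℚ) (n : ℕ) : ∑ m ∈ Finset.range (3 * n), f m
    = ∑ i ∈ Finset.range n, (f (3 * i) + f (3 * i + 1) + f (3 * i + 2)) := by
  induction n with
  | zero => simp
  | succ n ih =>
    rw [show 3 * (n + 1) = 3 * n + 1 + 1 + 1 by ring, Finset.sum_range_succ, Finset.sum_range_succ,
      Finset.sum_range_succ, Finset.sum_range_succ, ih]
    ring

lemma padicDvd_sum_inv_sq_sub {n : ℕ} (hn : p = 3 * n + 1) (h1 : 1 < n) :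
    PadicDvd p 1 (∑ i ∈ Finset.range n, (1 / (2 / 3 + (i : ℚ)) ^ 2 - 1 / (1 + (i : ℚ)) ^ 2)
      + 3 * ∑ r ∈ Finset.Icc 1 n, 1 / (r : ℚ) ^ 2) := by
  have hs := padicDvd_sum_inv_sq (p := p) (by omega)
  rw [show p - 1 = 3 * n by omega, sum_range_three_mul] at hs
  have hr : PadicDvd p 1 (∑ i ∈ Finset.range n, (1 / ((3 * i + 2 + 1 : ℕ) : ℚ) ^ 2
      - 1 / ((3 * (n - 1 - i) + 1 : ℕ) : ℚ) ^ 2)) := by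
    refine PadicDvd.sum fun i hi => ?_
    rw [Finset.mem_range] at hi
    have hu : PadicUnit p ((3 * i + 2 + 1 : ℕ) : ℚ) := .of_lt (by omega) (by omega)
    have hv : PadicUnit p ((3 * (n - 1 - i) + 1 : ℕ) : ℚ) := .of_lt (by omega) (by omega)
    refine PadicDvd.div_sub_div (by simpa using padicDvd_zero 1) ?_ PadicUnit.one.integral
      (hu.pow 2) (hv.pow 2)
    have hpq : ((3 * i + 2 + 1 : ℕ) : ℚ) + ((3 * (n - 1 - i) + 1 : ℕ) : ℚ) = (p : ℚ) ^ 1 := by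
      rw [pow_one]; exact_mod_cast (by omega)
    have := (padicDvd_pow (p := p) 1).mul_integral (hu.integral.sub hv.integral)
    rw [← hpq] at this
    convert this using 1
    ring
  rw [Finset.sum_sub_distrib,
    Finset.sum_range_reflect (fun i => 1 / ((3 * i + 1 : ℕ) : ℚ) ^ 2) n] at hr
  have hH : ∑ r ∈ Finset.Icc 1 n, 1 / (r : ℚ) ^ 2
      = ∑ i ∈ Finset.range n, 1 / (1 + (i : ℚ)) ^ 2 := by
    rw [Finset.range_eq_Ico, ← Finset.Ico_add_one_right_eq_Icc, Finset.sum_Ico_eq_sum_range]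
    simp
  have h3 : ∑ i ∈ Finset.range n, 1 / ((3 * i + 2 + 1 : ℕ) : ℚ) ^ 2
      = 1 / 9 * ∑ i ∈ Finset.range n, 1 / (1 + (i : ℚ)) ^ 2 := by
    rw [Finset.mul_sum]
    refine Finset.sum_congr rfl fun i _ => ?_
    push_cast
    rw [show 3 * (i : ℚ) + 2 + 1 = 3 * (1 + i) by ring]
    field_simp
    norm_num
  have h2 : ∑ i ∈ Finset.range n, 1 / (2 / 3 + (i : ℚ)) ^ 2
      = 9 * ∑ i ∈ Finset.range n, 1 / ((3 * i + 1 + 1 : ℕ) : ℚ) ^ 2 := by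
    rw [Finset.mul_sum]
    refine Finset.sum_congr rfl fun i _ => ?_
    push_cast
    rw [show 2 / 3 + (i : ℚ) = (3 * i + 1 + 1) / 3 by ring]
    field_simp
    norm_num
  rw [Finset.sum_add_distrib, Finset.sum_add_distrib, h3] at hs
  rw [h3] at hr
  rw [Finset.sum_sub_distrib, hH, h2]
  have h := (hs.add hr).mul_integral (padicDvd_natCast 9)
  convert h using 1
  push_cast
  ring

end InverseSquares

/-! ### The single sum modulo `p ^ 4` -/

section SingleSum

variable {p n : ℕ} [hp : Fact p.Prime]

lemma rf_div_rf (x : ℚ) (k : ℕ) :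
    rf x k / rf 1 k = ∏ i ∈ Finset.range k, (x + i) / (1 + i) := by
  rw [rf, rf, Finset.prod_div_distrib]

lemma padicUnit_one_add {i : ℕ} (h : i + 1 < p) : PadicUnit p (1 + (i : ℚ)) := by
  have : PadicUnit p ((i + 1 : ℕ) : ℚ) := .of_lt (by omega) h
  rwa [Nat.cast_add, Nat.cast_one, add_comm] at this

lemma padicDvd_div_three_add (h : 3 < p) (a i : ℕ) : PadicDvd p 0 ((a : ℚ) / 3 + i) := by
  have h3 : PadicUnit p ((3 : ℕ) : ℚ) := .of_lt (by omega) h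
  exact ((padicDvd_natCast a).div_unit h3).add (padicDvd_natCast i)

lemma padicDvd_one_third_add (h : 3 < p) (i : ℕ) : PadicDvd p 0 (1 / 3 + (i : ℚ)) := by
  simpa using padicDvd_div_three_add h 1 i

lemma padicDvd_rf_div_rf (h : 3 < p) (a : ℕ) {k : ℕ} (hk : k < p) :
    PadicDvd p 0 (rf ((a : ℚ) / 3) k / rf 1 k) := by
  rw [rf_div_rf]
  refine PadicDvd.prod_integral fun i hi => ?_
  rw [Finset.mem_range] at hi
  exact (padicDvd_div_three_add h a i).div_unit (padicUnit_one_add (by omega))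

lemma padicDvd_add_third (hn : p = 3 * n + 1) (h1 : 1 < n) : PadicDvd p 1 ((n : ℚ) + 1 / 3) := by
  have h3 : PadicUnit p ((3 : ℕ) : ℚ) := .of_lt (by omega) (by omega)
  have h := (padicDvd_pow (p := p) 1).div_unit h3
  convert h using 1
  rw [hn]; push_cast; ring

lemma padicDvd_rf_one_third_div (hn : p = 3 * n + 1) (h1 : 1 < n) {k : ℕ} (hk : k < p)
    (hnk : n < k) : PadicDvd p 1 (rf (1 / 3) k / rf 1 k) := by
  rw [rf_div_rf, ← Finset.mul_prod_erase _ _ (Finset.mem_range.2 hnk)]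
  refine PadicDvd.mul_integral ?_ (PadicDvd.prod_integral fun i hi => ?_)
  · rw [add_comm]
    exact (padicDvd_add_third hn h1).div_unit (padicUnit_one_add (by omega))
  · have := Finset.mem_range.1 (Finset.mem_of_mem_erase hi)
    exact (padicDvd_one_third_add (by omega) i).div_unit (padicUnit_one_add (by omega))

lemma padicDvd_term_sub_wpTerm (hn : p = 3 * n + 1) (h1 : 1 < n) {k : ℕ} (hk : k ≤ n) :
    PadicDvd p 4 ((6 * (k : ℚ) + 1) * (rf (1 / 3) k / rf 1 k) ^ 6
      - wpTerm (-((n : ℚ) + 1 / 3) ^ 2) n k) := by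
  have hX := (padicDvd_add_third hn h1).pow 2
  set X := ((n : ℚ) + 1 / 3) ^ 2
  have hk0 : PadicDvd p 0 (6 * (k : ℚ) + 1) := by
    simpa using padicDvd_natCast (p := p) (6 * k + 1)
  rw [wpTerm, rf_div_rf, ← Finset.prod_pow, ← mul_sub, mul_comm]
  have hu (i : ℕ) : PadicDvd p 0 (1 / 3 + (i : ℚ)) := padicDvd_one_third_add (by omega) i
  have hX0 : PadicDvd p 0 X := hX.mono (by omega)
  have hv : ∀ i < k, PadicUnit p (1 + (i : ℚ)) := fun i hi => padicUnit_one_add (by omega)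
  have hs i := (hu i).pow_integral 2
  have hsplit : ∀ i ∈ Finset.range k, (1 / 3 + (i : ℚ)) ^ 2 / (1 + (i : ℚ)) ^ 2
      * (((1 / 3 + (i : ℚ)) ^ 2 - -X) / ((1 + (i : ℚ)) ^ 2 - -X))
      * (((1 / 3 + (i : ℚ)) ^ 2 - X) / ((1 + (i : ℚ)) ^ 2 - X))
      = ((1 / 3 + (i : ℚ)) ^ 2 * ((1 / 3 + (i : ℚ)) ^ 2 + X) * ((1 / 3 + (i : ℚ)) ^ 2 - X))
      / ((1 + (i : ℚ)) ^ 2 * ((1 + (i : ℚ)) ^ 2 + X) * ((1 + (i : ℚ)) ^ 2 - X)) := by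
    intro i _
    rw [sub_neg_eq_add, sub_neg_eq_add, div_mul_div_comm, div_mul_div_comm]
  rw [Finset.prod_congr rfl hsplit]
  simp only [div_pow]
  have hden : ∀ i < k, PadicUnit p
      ((1 + (i : ℚ)) ^ 2 * ((1 + (i : ℚ)) ^ 2 + X) * ((1 + (i : ℚ)) ^ 2 - X)) := fun i hi =>
    (((hv i hi).pow 2).mul (((hv i hi).pow 2).add_of_dvd hX)).mul (((hv i hi).pow 2).sub_of_dvd hX)
  refine (PadicDvd.prod_sub_prod (fun i hi => ?_) (fun i hi => ?_) fun i hi => ?_).mul_integral hk0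
  all_goals rw [Finset.mem_range] at hi
  · refine PadicDvd.div_sub_div ?_ ?_ ((hu i).pow_integral 6) ((hv i hi).pow 6) (hden i hi)
    · convert (hX.mul hX).mul_integral (hs i) using 1
      ring
    · convert (hX.mul hX).mul_integral ((hv i hi).pow 2).integral using 1
      ring
  · exact ((hu i).pow_integral 6).div_unit ((hv i hi).pow 6)
  · exact (((hs i).mul_integral ((hs i).add hX0)).mul_integral ((hs i).sub hX0)).div_unit
      (hden i hi)

lemma padicDvd_wpSum_sub (hn : p = 3 * n + 1) (h1 : 1 < n) :
    PadicDvd p 4 (wpSum (-((n : ℚ) + 1 / 3) ^ 2) n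
      - p * ((rf (2 / 3) n / rf 1 n) ^ 3
        * (1 - p ^ 2 * (∑ r ∈ Finset.Icc 1 n, 1 / (r : ℚ) ^ 2) / 3))) := by
  have hX := (padicDvd_add_third hn h1).pow 2
  have hXp : ((n : ℚ) + 1 / 3) ^ 2 = (p : ℚ) ^ 2 / 9 := by rw [hn]; push_cast; ring
  have hp3 : 3 * (n : ℚ) + 1 = (p : ℚ) ^ 1 := by rw [hn]; push_cast; ring
  rw [← sub_eq_zero] at hXp
  set X := ((n : ℚ) + 1 / 3) ^ 2
  set H := ∑ r ∈ Finset.Icc 1 n, 1 / (r : ℚ) ^ 2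
  have hu (i : ℕ) (hi : i < n) : PadicUnit p (2 / 3 + (i : ℚ)) := by
    have hu3 : PadicUnit p ((3 : ℕ) : ℚ) := .of_lt (by omega) (by omega)
    have h : PadicUnit p ((3 * i + 2 : ℕ) : ℚ) := .of_lt (by omega) (by omega)
    convert h.div hu3 using 1
    push_cast; ring
  have hv (i : ℕ) (hi : i < n) : PadicUnit p (1 + (i : ℚ)) := padicUnit_one_add (by omega)
  set D : ℕ → ℚ := fun i => 1 / (2 / 3 + (i : ℚ)) ^ 2 - 1 / (1 + (i : ℚ)) ^ 2 with hD
  have hD0 i (hi : i < n) : PadicDvd p 0 (D i) :=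
    (PadicUnit.one.integral.div_unit ((hu i hi).pow 2)).sub
      (PadicUnit.one.integral.div_unit ((hv i hi).pow 2))
  have hR0 i (hi : i < n) : PadicDvd p 0 ((2 / 3 + (i : ℚ)) / (1 + (i : ℚ))) :=
    (hu i hi).integral.div_unit (hv i hi)
  have hX0 : PadicDvd p 0 X := hX.mono (by omega)
  have hE0 i (hi : i < n) : PadicDvd p 0 (1 + X * D i) :=
    PadicUnit.one.integral.add (hX0.mul_integral (hD0 i hi))
  have hprod : PadicDvd p 4 (∏ i ∈ Finset.range n, ((2 / 3 + (i : ℚ)) / (1 + (i : ℚ))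
      * (((2 / 3 + (i : ℚ)) ^ 2 - -X) / ((1 + (i : ℚ)) ^ 2 - -X)))
      - ∏ i ∈ Finset.range n, (((2 / 3 + (i : ℚ)) / (1 + (i : ℚ))) ^ 3 * (1 + X * D i))) := by
    simp only [sub_neg_eq_add]
    refine PadicDvd.prod_sub_prod (fun i hi => ?_) (fun i hi => ?_) fun i hi => ?_
    all_goals rw [Finset.mem_range] at hi
    · have h := ((hX.mul hX).mul_integral ((hR0 i hi).mul_integral
        (((hv i hi).pow 2).integral.sub ((hu i hi).pow 2).integral))).neg.div_unit
        (((hv i hi).pow 4).mul (((hv i hi).pow 2).add_of_dvd hX))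
      convert h using 1
      have h2 := (((hv i hi).pow 2).add_of_dvd hX).ne_zero
      have h3 := (hv i hi).ne_zero
      have h4 := (hu i hi).ne_zero
      simp only [hD]
      obtain ⟨u, hu'⟩ : ∃ u, u = 2 / 3 + (i : ℚ) := ⟨_, rfl⟩
      obtain ⟨v, hv'⟩ : ∃ v, v = 1 + (i : ℚ) := ⟨_, rfl⟩
      rw [← hu'] at h4 ⊢
      rw [← hv'] at h2 h3 ⊢
      field_simp
      ring
    · exact (hR0 i hi).mul_integral ((((hu i hi).pow 2).integral.add hX0).div_unit
        (((hv i hi).pow 2).add_of_dvd hX))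
    · exact ((hR0 i hi).pow_integral 3).mul_integral (hE0 i hi)
  rw [Finset.prod_mul_distrib (f := fun i : ℕ => ((2 / 3 + (i : ℚ)) / (1 + (i : ℚ))) ^ 3),
    Finset.prod_pow, ← rf_div_rf] at hprod
  set U := rf (2 / 3) n / rf 1 n with hU
  have hU0 : PadicDvd p 0 U := by
    simpa using padicDvd_rf_div_rf (p := p) (by omega) 2 (k := n) (by omega)
  have hone : PadicDvd p 4 _ := padicDvd_prod_one_add (s := Finset.range n) hX
    (fun i hi => hD0 i (Finset.mem_range.1 hi))
  have hlin : PadicDvd p 3 ((1 + X * ∑ i ∈ Finset.range n, D i) - (1 - p ^ 2 * H / 3)) := by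
    have h := hX.mul (padicDvd_sum_inv_sq_sub hn h1)
    convert h using 1
    simp only [hD]
    linear_combination (-3 * H) * hXp
  have h3 := ((hone.mono (by norm_num)).trans hlin).mul_integral (hU0.pow_integral 3)
  have h4 := (hprod.mono (n := 3) (by norm_num)).add h3
  have h5 := (padicDvd_pow (p := p) 1).mul h4
  rw [wpSum, hp3]
  convert h5 using 1
  ring

lemma padicDvd_single_sum (hn : p = 3 * n + 1) (h1 : 1 < n) :
    PadicDvd p 4 (∑ k ∈ Finset.range (n + 1), (6 * (k : ℚ) + 1) * (rf (1 / 3) k / rf 1 k) ^ 6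
      - p * ((rf (2 / 3) n / rf 1 n) ^ 3
        * (1 - p ^ 2 * (∑ r ∈ Finset.Icc 1 n, 1 / (r : ℚ) ^ 2) / 3))) := by
  refine PadicDvd.trans ?_ (padicDvd_wpSum_sub hn h1)
  have hY : -((n : ℚ) + 1 / 3) ^ 2 < 0 := by
    have : 0 < ((n : ℚ) + 1 / 3) ^ 2 := by positivity
    linarith
  rw [← sum_wpTerm hY, ← Finset.sum_sub_distrib]
  exact PadicDvd.sum fun k hk =>
    padicDvd_term_sub_wpTerm hn h1 (Nat.lt_succ_iff.1 (Finset.mem_range.1 hk))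

lemma padicDvd_cube_sub {S s : ℚ} (hs : PadicDvd p 0 s) (h : PadicDvd p 4 (S - p * s)) :
    PadicDvd p 6 (S ^ 3 - p ^ 3 * s ^ 3) := by
  have hps : PadicDvd p 1 (p * s) := by
    simpa using (padicDvd_pow (p := p) 1).mul_integral hs
  have hS : PadicDvd p 1 S := by simpa using (h.mono (n := 1) (by norm_num)).add hps
  have h2 := h.mul (((hS.mul hS).add (hS.mul hps)).add (hps.mul hps))
  convert h2 using 1
  ring

lemma padicDvd_main_term {U H : ℚ} (h3 : 3 < p) (hU : PadicDvd p 0 U) (hH : PadicDvd p 0 H) :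
    PadicDvd p 6 (p ^ 3 * (U ^ 3 * (1 - p ^ 2 * H / 3)) ^ 3 - U ^ 9 * (p ^ 3 - p ^ 5 * H)) := by
  have hu3 : PadicUnit p ((3 : ℕ) : ℚ) := .of_lt (by omega) h3
  have hH3 : PadicDvd p 0 (H / 3) := hH.div_unit hu3
  have hint : PadicDvd p 0 ((H / 3) ^ 2 * (3 - p ^ 2 * (H / 3)) * U ^ 9 * p) :=
    (((hH3.pow_integral 2).mul_integral ((hu3.integral).sub
      (((padicDvd_natCast p).pow_integral 2).mul_integral hH3))).mul_integral
      (hU.pow_integral 9)).mul_integral (padicDvd_natCast p)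
  convert (padicDvd_pow (p := p) 6).mul_integral hint using 1
  ring

end SingleSum

/-- Corollary 1.4: for a prime `p ≡ 1 (mod 6)`,
`∑_{i+j+k≤p-1} (6i+1)(6j+1)(6k+1) (1/3)_i⁶(1/3)_j⁶(1/3)_k⁶/((1)_i⁶(1)_j⁶(1)_k⁶)
  ≡ ((2/3)_{(p-1)/3}⁹/(1)_{(p-1)/3}⁹)·{p³ - p⁵ H_{(p-1)/3}^{(2)}} (mod p⁶)`,
i.e. `p⁶` divides the numerator of the difference, where `H_n^{(2)} = ∑_{r=1}^n 1/r²`. -/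
theorem stmt_10 (p : ℕ) (hp : p.Prime) (h6 : p % 6 = 1) :
    (p : ℤ) ^ 6 ∣
      ((∑ i ∈ Finset.range p, ∑ j ∈ Finset.range (p - i), ∑ k ∈ Finset.range (p - i - j),
          ((6 * (i : ℚ) + 1) * (6 * (j : ℚ) + 1) * (6 * (k : ℚ) + 1))
            * (rf (1/3) i ^ 6 * rf (1/3) j ^ 6 * rf (1/3) k ^ 6)
            / (rf 1 i ^ 6 * rf 1 j ^ 6 * rf 1 k ^ 6))
        - rf (2/3) ((p - 1) / 3) ^ 9 / rf 1 ((p - 1) / 3) ^ 9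
          * ((p : ℚ) ^ 3 - (p : ℚ) ^ 5
            * ∑ r ∈ Finset.Icc 1 ((p - 1) / 3), 1 / (r : ℚ) ^ 2)).num := by
  have : Fact p.Prime := ⟨hp⟩
  have hp2 := hp.two_le
  obtain ⟨n, hn⟩ : ∃ n, n = (p - 1) / 3 := ⟨_, rfl⟩
  have hpn : p = 3 * n + 1 := by omega
  have h1 : 1 < n := by omega
  rw [← hn, ← div_pow]
  set a : ℕ → ℚ := fun k => (6 * (k : ℚ) + 1) * (rf (1 / 3) k / rf 1 k) ^ 6 with ha
  have ha0 (k : ℕ) : PadicDvd p 0 (6 * (k : ℚ) + 1) := by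
    simpa using padicDvd_natCast (p := p) (6 * k + 1)
  have htriple := padicDvd_simplex_sum_sub_cube (p := p) (m := 6) (N := n) (a := a) (by omega)
    (fun k hk => (ha0 k).mul_integral
      ((by simpa using padicDvd_rf_div_rf (by omega) 1 hk :
        PadicDvd p 0 (rf (1 / 3) k / rf 1 k)).pow_integral 6))
    (fun k hk hnk => by
      simp only [ha]; rw [mul_comm]
      exact ((padicDvd_rf_one_third_div hpn h1 hk hnk).pow 6).mul_integral (ha0 k))
  have hU0 : PadicDvd p 0 (rf (2 / 3) n / rf 1 n) := by
    simpa using padicDvd_rf_div_rf (p := p) (by omega) 2 (k := n) (by omega)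
  have hH0 : PadicDvd p 0 (∑ r ∈ Finset.Icc 1 n, 1 / (r : ℚ) ^ 2) := by
    refine PadicDvd.sum fun r hr => PadicUnit.one.integral.div_unit (PadicUnit.pow ?_ 2)
    rw [Finset.mem_Icc] at hr
    exact .of_lt (by omega) (by omega)
  have hs0 : PadicDvd p 0 ((rf (2 / 3) n / rf 1 n) ^ 3
      * (1 - p ^ 2 * (∑ r ∈ Finset.Icc 1 n, 1 / (r : ℚ) ^ 2) / 3)) := by
    have hu3 : PadicUnit p ((3 : ℕ) : ℚ) := .of_lt (by omega) (by omega)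
    exact (hU0.pow_integral 3).mul_integral (PadicUnit.one.integral.sub
      ((((padicDvd_natCast p).pow_integral 2).mul_integral hH0).div_unit hu3))
  have hmain := (htriple.trans (padicDvd_cube_sub hs0 (padicDvd_single_sum hpn h1))).trans
    (padicDvd_main_term (by omega) hU0 hH0)
  refine PadicDvd.dvd_num ?_
  convert hmain using 8
  simp only [ha, div_pow]
  ring
end
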